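/- arXiv:1601.05906 — 3 statements merged into one kernel-verified Lean document; each statement's English description precedes it below -/
import Mathlib

section
/- Let n ≥ 2 and p, q ≥ 1 with p + q = n, and let λ ∈ sl_n(ℂ) be the diagonal traceless matrix whose first p diagonal entries equal q and whose last q diagonal entries equal −p. Let C = {t·g·λ·g⁻¹ : t ∈ ℂ∖{0}, g ∈ GL_n(ℂ)} and let 𝔭_u ⊆ sl_n(ℂ) be the space of block matrices [[0, B],[0, 0]] with B an arbitrary p×q complex matrix. Then the Zariski closure of C in sl_n(ℂ) equals {g·(t·λ + N)·g⁻¹ : t ∈ ℂ, N ∈ 𝔭_u, g ∈ GL_n(ℂ)}, and this set also equals C ∪ {X ∈ sl_n(ℂ) : X² = 0 and rank X ≤ min(p, q)}. -/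
open Matrix

noncomputable section

abbrev Mat (n : ℕ) := Matrix (Fin n) (Fin n) ℂ

/-- A subset of the space of `n×n` complex matrices is Zariski closed if it is the
common zero locus of a family of polynomials in the matrix entries. -/
def zclosed {n : ℕ} (S : Set (Mat n)) : Prop :=
  ∃ T : Set (MvPolynomial (Fin n × Fin n) ℂ),
    S = {X | ∀ p ∈ T, MvPolynomial.eval (fun q => X q.1 q.2) p = 0}

/-- The Zariski closure of a set of matrices. -/
def zclosure {n : ℕ} (S : Set (Mat n)) : Set (Mat n) :=
  ⋂₀ {C | zclosed C ∧ S ⊆ C}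

/-! Writing `λ = q F₀ - p (1 - F₀)` with `F₀` the projection onto the first `p` coordinates, `C`
is the set of the matrices `t (q F - p (1 - F))` with `t ≠ 0` and `F` an idempotent of rank `p`.

For the upper bound on the closure, consider the incidence variety of pairs `(X, t)` cut out by
`(X + t p) (X - t q) = 0`, `rank (X + t p) ≤ p` and `rank (X - t q) ≤ q`. It satisfies
`tr X² = t² p q (p + q)`, so `t` is integral over the coordinate ring of matrices and the variety
has closed image under `(X, t) ↦ X`. The part with `t ≠ 0` maps onto `C`, and the part with `t = 0`
onto the set of the `X` with `X² = 0` and `rank X ≤ min p q`.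

For the lower bound, if `F N = N` and `N F = 0` then `F + s N` is an idempotent of rank `p` for
every scalar `s`; with `s = 1 / (t (p + q))` this puts `t (q F - p (1 - F)) + N` into `C` when
`t ≠ 0`, hence into its closure when `t = 0`. Finally, a square-zero `X` of rank at most `min p q`
satisfies `F X = X` and `X F = 0` for any projection `F` onto a `p`-dimensional space between the
range and the kernel of `X`. -/

section PointClosure

variable {R S K : Type*} [CommRing R] [CommRing S] [Field K]

/-- The Zariski closure of a set of `K`-valued points of `Spec R`, a point being encoded as a ring
homomorphism `R →+* K`. -/
def pointClosure (Z : Set (R →+* K)) : Set (R →+* K) :=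
  {φ | ∀ f, (∀ ψ ∈ Z, ψ f = 0) → φ f = 0}

theorem pointClosure_mono {Y Z : Set (R →+* K)} (h : Y ⊆ Z) : pointClosure Y ⊆ pointClosure Z :=
  fun _ hφ f hf => hφ f fun ψ hψ => hf ψ (h hψ)

theorem exists_ringHom_comp_algebraMap_eq [IsAlgClosed K] [Algebra R S] [Algebra.IsIntegral R S]
    {φ : R →+* K} {I : Ideal S} (hI : I.comap (algebraMap R S) ≤ RingHom.ker φ) :
    ∃ ψ : S →+* K, I ≤ RingHom.ker ψ ∧ ψ.comp (algebraMap R S) = φ := by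
  have : (RingHom.ker φ).IsPrime := RingHom.ker_isPrime φ
  obtain ⟨Q, hIQ, hQ, hQφ⟩ := Ideal.exists_ideal_over_prime_of_isIntegral (RingHom.ker φ) I hI
  have : Q.LiesOver (RingHom.ker φ) := ⟨hQφ.symm⟩
  algebraize [φ.kerLift]
  have : FaithfulSMul (R ⧸ RingHom.ker φ) K :=
    (faithfulSMul_iff_algebraMap_injective _ _).2 φ.kerLift_injective
  have : Module.IsTorsionFree (R ⧸ RingHom.ker φ) (S ⧸ Q) :=
    Module.isTorsionFree_iff_faithfulSMul.2 inferInstance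
  let lift : S ⧸ Q →ₐ[R ⧸ RingHom.ker φ] K := IsAlgClosed.lift
  refine ⟨lift.toRingHom.comp (Ideal.Quotient.mk Q), fun s hs => ?_, RingHom.ext fun r => ?_⟩
  · simp [RingHom.mem_ker, Ideal.Quotient.eq_zero_iff_mem.2 (hIQ hs)]
  · exact lift.commutes (Ideal.Quotient.mk _ r)

theorem exists_mem_pointClosure_comp_algebraMap_eq [IsAlgClosed K] [Algebra R S]
    [Algebra.IsIntegral R S] {W : Set (S →+* K)} {φ : R →+* K}
    (hφ : φ ∈ pointClosure ((fun ψ => ψ.comp (algebraMap R S)) '' W)) :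
    ∃ ψ ∈ pointClosure W, ψ.comp (algebraMap R S) = φ := by
  have hker : (⨅ ψ ∈ W, RingHom.ker ψ).comap (algebraMap R S) ≤ RingHom.ker φ := by
    intro f hf
    simp only [Ideal.mem_comap, Ideal.mem_iInf, RingHom.mem_ker] at hf
    exact hφ f (by rintro _ ⟨ψ, hψ, rfl⟩; exact hf ψ hψ)
  obtain ⟨ψ, hψ, hψφ⟩ := exists_ringHom_comp_algebraMap_eq hker
  refine ⟨ψ, fun f hf => hψ ?_, hψφ⟩
  simpa only [Ideal.mem_iInf, RingHom.mem_ker] using hf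

variable {m n : Type*} [Finite m] [Fintype n]

theorem exists_linearIndependent_row_submatrix {A : Matrix m n K} {r : ℕ} (hr : r ≤ A.rank) :
    ∃ f : Fin r → m, LinearIndependent K (A.submatrix f id).row := by
  rw [rank_eq_finrank_span_row] at hr
  obtain ⟨v, hv, -, hli⟩ := Submodule.exists_fun_fin_finrank_span_eq K (Set.range A.row)
  choose f hf using hv
  obtain rfl : (fun i => A.row (f i)) = v := funext hf
  exact ⟨f ∘ Fin.castLE hr, hli.comp _ (Fin.castLE_injective hr)⟩

theorem exists_submatrix_det_ne_zero {A : Matrix m n K} {r : ℕ} (hr : r ≤ A.rank) :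
    ∃ (f : Fin r → m) (g : Fin r → n), (A.submatrix f g).det ≠ 0 := by
  obtain ⟨f, hf⟩ := exists_linearIndependent_row_submatrix hr
  have hrank : (A.submatrix f id)ᵀ.rank = r := by
    rw [rank_transpose, hf.rank_matrix, Fintype.card_fin]
  obtain ⟨g, hg⟩ := exists_linearIndependent_row_submatrix hrank.ge
  refine ⟨f, g, ?_⟩
  rw [← det_transpose, ← isUnit_iff_ne_zero, ← isUnit_iff_isUnit_det]
  exact linearIndependent_rows_iff_isUnit.1 hg

theorem rank_map_le_of_mem_pointClosure {Z : Set (R →+* K)} {φ : R →+* K} (hφ : φ ∈ pointClosure Z)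
    {M : Matrix m n R} {r : ℕ} (hZ : ∀ ψ ∈ Z, (M.map ψ).rank ≤ r) : (M.map φ).rank ≤ r := by
  by_contra! hlt
  obtain ⟨f, g, hdet⟩ := exists_submatrix_det_ne_zero hlt
  have map_minor (ψ : R →+* K) : ψ (M.submatrix f g).det = ((M.map ψ).submatrix f g).det := by
    rw [RingHom.map_det, RingHom.mapMatrix_apply, submatrix_map]
  refine hdet (map_minor φ ▸ hφ _ fun ψ hψ => ?_)
  rw [map_minor]
  by_contra hne
  have hle := ((M.map ψ).rank_submatrix_le f g).trans (hZ ψ hψ)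
  rw [rank_of_det_ne_zero hne, Fintype.card_fin] at hle
  omega

end PointClosure

section Idempotents

open Module

theorem isIdempotentElem_add_of_mul_eq {R : Type*} [NonUnitalSemiring R] {e a : R}
    (he : IsIdempotentElem e) (hea : e * a = a) (hae : a * e = 0) : IsIdempotentElem (e + a) := by
  have haa : a * a = 0 := by
    nth_rw 2 [← hea]
    rw [← mul_assoc, hae, zero_mul]
  rw [IsIdempotentElem, add_mul, mul_add, mul_add, he.eq, hea, hae, haa, zero_add, add_zero]

theorem isIdempotentElem_units_conj {M : Type*} [Monoid M] {e : M} (he : IsIdempotentElem e)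
    (g : Mˣ) : IsIdempotentElem (g * e * (g⁻¹ : Mˣ) : M) := by
  simp only [IsIdempotentElem, mul_assoc, Units.inv_mul_cancel_left]
  rw [← mul_assoc e, he.eq]

variable {K V : Type*} [Field K] [AddCommGroup V] [Module K V] [FiniteDimensional K V]

theorem isConj_of_finrank_range_eq {e f : End K V} (he : IsIdempotentElem e)
    (hf : IsIdempotentElem f) (hrank : finrank K e.range = finrank K f.range) : IsConj e f := by
  have hker : finrank K e.ker = finrank K f.ker := by
    have he := e.finrank_range_add_finrank_ker
    have hf := f.finrank_range_add_finrank_ker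
    omega
  let u := LinearEquiv.ofFinrankEq e.range f.range hrank
  let v := LinearEquiv.ofFinrankEq e.ker f.ker hker
  let Φ := Submodule.prodEquivOfIsCompl _ _ (LinearMap.IsIdempotentElem.isCompl he)
  let Ψ := Submodule.prodEquivOfIsCompl _ _ (LinearMap.IsIdempotentElem.isCompl hf)
  refine ⟨LinearMap.GeneralLinearGroup.ofLinearEquiv (Φ.symm ≪≫ₗ u.prodCongr v ≪≫ₗ Ψ), ?_⟩
  refine LinearMap.ext fun x => ?_
  obtain ⟨⟨a, b⟩, rfl⟩ := Φ.surjective x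
  have heΦ : e (Φ (a, b)) = Φ (a, 0) := by
    have := (LinearMap.IsIdempotentElem.mem_range_iff he).1 a.2
    have := b.2
    simp_all [Φ]
  have hfΨ : f (Ψ (u a, v b)) = Ψ (u a, 0) := by
    have := (LinearMap.IsIdempotentElem.mem_range_iff hf).1 (u a).2
    have := (v b).2
    simp_all [Ψ]
  change Ψ (u.prodCongr v (Φ.symm (e (Φ (a, b))))) = f (Ψ (u.prodCongr v (Φ.symm (Φ (a, b)))))
  rw [heΦ, Φ.symm_apply_apply, Φ.symm_apply_apply]
  simp [hfΨ]

theorem exists_submodule_between_finrank_eq {A B : Submodule K V} (hAB : A ≤ B) {p : ℕ}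
    (hA : finrank K A ≤ p) (hB : p ≤ finrank K B) :
    ∃ W : Submodule K V, A ≤ W ∧ W ≤ B ∧ finrank K W = p := by
  induction p, hA using Nat.le_induction with
  | base => exact ⟨A, le_rfl, hAB, rfl⟩
  | succ k _ ih =>
    obtain ⟨W, hAW, hWB, hW⟩ := ih (by omega)
    obtain ⟨v, hvB, hvW⟩ := SetLike.exists_of_lt (hWB.lt_of_ne (by rintro rfl; omega))
    refine ⟨W ⊔ K ∙ v, hAW.trans le_sup_left,
      sup_le hWB ((Submodule.span_singleton_le_iff_mem _ _).2 hvB), ?_⟩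
    have hv : v ≠ 0 := by rintro rfl; exact hvW W.zero_mem
    have hsum := Submodule.finrank_sup_add_finrank_inf_eq W (K ∙ v)
    rw [((Submodule.disjoint_span_singleton' hv).2 hvW).eq_bot, finrank_bot,
      finrank_span_singleton hv] at hsum
    omega

theorem exists_isIdempotentElem_of_mul_self_eq_zero {f : End K V} (hf : f * f = 0) {p : ℕ}
    (hrange : finrank K f.range ≤ p) (hker : p ≤ finrank K f.ker) :
    ∃ e : End K V, IsIdempotentElem e ∧ finrank K e.range = p ∧ e * f = f ∧ f * e = 0 := by
  obtain ⟨W, hfW, hWf, rfl⟩ :=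
    exists_submodule_between_finrank_eq (LinearMap.range_le_ker_iff.2 hf) hrange hker
  obtain ⟨W', hW⟩ := W.exists_isCompl
  have hidem := Submodule.isIdempotentElem_projection hW
  refine ⟨W.projection W' hW, hidem, by rw [Submodule.range_projection],
    (LinearMap.IsIdempotentElem.comp_eq_right_iff hidem f).2 (by rwa [Submodule.range_projection]),
    LinearMap.range_le_ker_iff.1 (by rwa [Submodule.range_projection])⟩

variable {ι : Type*} [Fintype ι]

theorem isIdempotentElem_toLin'_iff [DecidableEq ι] {E : Matrix ι ι K} :
    IsIdempotentElem (toLin' E) ↔ IsIdempotentElem E := by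
  rw [IsIdempotentElem, IsIdempotentElem, Module.End.mul_eq_comp, ← toLin'_mul,
    toLin'.injective.eq_iff]

theorem trace_eq_rank_of_isIdempotentElem {E : Matrix ι ι K} (hE : IsIdempotentElem E) :
    E.trace = E.rank := by
  classical
  rw [← trace_toLin'_eq,
    (LinearMap.IsIdempotentElem.isProj_range _ (isIdempotentElem_toLin'_iff.2 hE)).trace]
  rfl

theorem rank_eq_of_isIdempotentElem [CharZero K] {E : Matrix ι ι K} {p : ℕ}
    (hE : IsIdempotentElem E) (htr : E.trace = p) : E.rank = p := by
  exact_mod_cast (trace_eq_rank_of_isIdempotentElem hE).symm.trans htr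

theorem rank_one_sub_eq_of_isIdempotentElem [DecidableEq ι] [CharZero K] {E : Matrix ι ι K}
    {p q : ℕ} (hcard : p + q = Fintype.card ι) (hE : IsIdempotentElem E) (htr : E.trace = p) :
    (1 - E).rank = q := by
  refine rank_eq_of_isIdempotentElem hE.one_sub ?_
  rw [trace_sub, trace_one, htr, ← hcard]
  push_cast
  ring

theorem isConj_of_trace_eq [DecidableEq ι] [CharZero K] {E F : Matrix ι ι K}
    (hE : IsIdempotentElem E) (hF : IsIdempotentElem F) (htr : E.trace = F.trace) : IsConj E F := by
  rw [trace_eq_rank_of_isIdempotentElem hE, trace_eq_rank_of_isIdempotentElem hF,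
    Nat.cast_inj] at htr
  have hconj : IsConj (toLinAlgEquiv' E) (toLinAlgEquiv' F) := isConj_of_finrank_range_eq
    (isIdempotentElem_toLin'_iff.2 hE) (isIdempotentElem_toLin'_iff.2 hF) htr
  simpa using
    (toLinAlgEquiv' (R := K) (n := ι)).symm.toMulEquiv.toMonoidHom.map_isConj hconj

theorem exists_isIdempotentElem_trace_eq_of_mul_self_eq_zero {X : Matrix ι ι K} (hX : X * X = 0)
    {p q : ℕ} (hcard : p + q = Fintype.card ι) (hp : X.rank ≤ p) (hq : X.rank ≤ q) :
    ∃ F : Matrix ι ι K, IsIdempotentElem F ∧ F.trace = p ∧ F * X = X ∧ X * F = 0 := by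
  classical
  have hker : p ≤ finrank K (toLin' X).ker := by
    have := (toLin' X).finrank_range_add_finrank_ker
    rw [finrank_fintype_fun_eq_card] at this
    have : finrank K (toLin' X).range = X.rank := rfl
    omega
  obtain ⟨e, he, hrank, heX, hXe⟩ := exists_isIdempotentElem_of_mul_self_eq_zero
    (f := toLin' X) (by rw [Module.End.mul_eq_comp, ← toLin'_mul, hX, map_zero]) hp hker
  obtain ⟨F, rfl⟩ := toLin'.surjective e
  have hF := isIdempotentElem_toLin'_iff.1 he
  refine ⟨F, hF, (trace_eq_rank_of_isIdempotentElem hF).trans (congrArg _ hrank),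
    toLin'.injective ?_, toLin'.injective ?_⟩
  · rwa [toLin'_mul]
  · rwa [toLin'_mul, map_zero]

theorem rank_smul_le (c : K) (A : Matrix ι ι K) : (c • A).rank ≤ A.rank := by
  classical
  rw [← smul_one_mul]
  exact rank_mul_le_right _ _

end Idempotents

section SpectralPairs

variable {ι K : Type*} [DecidableEq ι] [Field K] {p q : ℕ}

/-- The matrix acting as `q` on the range and as `-p` on the kernel of an idempotent `F`. The
element `λ` of the paper is the case where `F` is the projection onto the first `p` coordinates. -/
def weightElement (p q : ℕ) (F : Matrix ι ι K) : Matrix ι ι K :=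
  (q : K) • F - (p : K) • (1 - F)

theorem smul_weightElement_add_smul_one (p q : ℕ) (F : Matrix ι ι K) (t : K) :
    t • weightElement p q F + (t * p) • 1 = (t * (p + q)) • F := by
  unfold weightElement
  module

theorem smul_weightElement_sub_smul_one (p q : ℕ) (F : Matrix ι ι K) (t : K) :
    t • weightElement p q F - (t * q) • 1 = (-(t * (p + q))) • (1 - F) := by
  unfold weightElement
  module

/-- The cone of nonzero multiples of the weight elements of the idempotents of trace `p`; over `ℂ`
and for `p + q = n` this is the cone over the conjugacy class of `λ`. -/
def idempotentCone (ι K : Type*) [Fintype ι] [DecidableEq ι] [Field K] (p q : ℕ) :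
    Set (Matrix ι ι K) :=
  {X | ∃ t : K, t ≠ 0 ∧ ∃ F : Matrix ι ι K, IsIdempotentElem F ∧ F.trace = p ∧
    X = t • weightElement p q F}

/-- The sweep of `K λ ⊕ 𝔭_u` under conjugation. The conjugates of the pair `(λ, 𝔭_u)` correspond to
the idempotents `F` of trace `p`, and the equations `F * N = N`, `N * F = 0` say that `N` lies in
the conjugate of `𝔭_u` attached to `F`. -/
def parabolicSweep (ι K : Type*) [Fintype ι] [DecidableEq ι] [Field K] (p q : ℕ) :
    Set (Matrix ι ι K) :=
  {X | ∃ (t : K) (F N : Matrix ι ι K), IsIdempotentElem F ∧ F.trace = p ∧ F * N = N ∧ N * F = 0 ∧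
    X = t • weightElement p q F + N}

/-- The determinantal equations of the incidence variety of pairs `(X, t)`, where `X` has
eigenvalues `t * q` and `-(t * p)` of multiplicities `p` and `q`, or is a degeneration of such. -/
structure IsSpectralPair [Fintype ι] (p q : ℕ) (X : Matrix ι ι K) (t : K) : Prop where
  mul_eq_zero : (X + (t * p) • 1) * (X - (t * q) • 1) = 0
  rank_add_le : (X + (t * p) • 1).rank ≤ p
  rank_sub_le : (X - (t * q) • 1).rank ≤ q

variable [Fintype ι] {X F : Matrix ι ι K} {t : K}

theorem trace_weightElement_mul_self (hcard : p + q = Fintype.card ι) (hF : IsIdempotentElem F)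
    (htr : F.trace = p) :
    (weightElement p q F * weightElement p q F).trace = p * q * (p + q) := by
  have hsq : weightElement p q F * weightElement p q F
      = ((q : K) * q) • F + ((p : K) * p) • (1 - F) := by
    simp only [weightElement, mul_sub, sub_mul, smul_mul_smul_comm, hF.eq, mul_one, one_mul,
      smul_sub]
    module
  have hcardK : (Fintype.card ι : K) = p + q := by rw [← hcard, Nat.cast_add]
  rw [hsq, trace_add, trace_smul, trace_smul, trace_sub, trace_one, htr, hcardK, smul_eq_mul,
    smul_eq_mul]
  ring

theorem IsSpectralPair.mul_self_eq_zero (hX : IsSpectralPair p q X 0) : X * X = 0 := by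
  simpa using hX.mul_eq_zero

theorem IsSpectralPair.rank_le_min (hX : IsSpectralPair p q X 0) : X.rank ≤ min p q :=
  le_min (by simpa using hX.rank_add_le) (by simpa using hX.rank_sub_le)

theorem IsSpectralPair.of_mem_pointClosure {R : Type*} [CommRing R] {W : Set (R →+* K)}
    {φ : R →+* K} (hφ : φ ∈ pointClosure W) {M : Matrix ι ι R} {T : R}
    (hW : ∀ ψ ∈ W, IsSpectralPair p q (M.map ψ) (ψ T)) : IsSpectralPair p q (M.map φ) (φ T) := by
  have map_add (ψ : R →+* K) :
      (M + (T * p) • 1).map ψ = M.map ψ + (ψ T * p) • (1 : Matrix ι ι K) := by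
    simp [Matrix.map_add, Matrix.map_smul']
  have map_sub (ψ : R →+* K) :
      (M - (T * q) • 1).map ψ = M.map ψ - (ψ T * q) • (1 : Matrix ι ι K) := by
    simp [Matrix.map_sub, Matrix.map_smul']
  refine ⟨?_, ?_, ?_⟩
  · rw [← map_add, ← map_sub, ← Matrix.map_mul]
    ext i j
    refine hφ _ fun ψ hψ => ?_
    have := congr_fun₂ (hW ψ hψ).mul_eq_zero i j
    rwa [← map_add, ← map_sub, ← Matrix.map_mul] at this
  · rw [← map_add]
    exact rank_map_le_of_mem_pointClosure hφ fun ψ hψ => map_add ψ ▸ (hW ψ hψ).rank_add_le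
  · rw [← map_sub]
    exact rank_map_le_of_mem_pointClosure hφ fun ψ hψ => map_sub ψ ▸ (hW ψ hψ).rank_sub_le

variable [CharZero K]

theorem isSpectralPair_smul_weightElement (hcard : p + q = Fintype.card ι)
    (hF : IsIdempotentElem F) (htr : F.trace = p) (t : K) :
    IsSpectralPair p q (t • weightElement p q F) t where
  mul_eq_zero := by
    rw [smul_weightElement_add_smul_one, smul_weightElement_sub_smul_one, smul_mul_smul_comm,
      hF.mul_one_sub_self, smul_zero]
  rank_add_le := by
    rw [smul_weightElement_add_smul_one, ← rank_eq_of_isIdempotentElem hF htr]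
    exact rank_smul_le _ _
  rank_sub_le := by
    rw [smul_weightElement_sub_smul_one]
    exact (rank_smul_le _ _).trans (rank_one_sub_eq_of_isIdempotentElem hcard hF htr).le

theorem IsSpectralPair.exists_eq_smul_weightElement (hcard : p + q = Fintype.card ι) (hp : 0 < p)
    (hX : IsSpectralPair p q X t) (ht : t ≠ 0) :
    ∃ F : Matrix ι ι K, IsIdempotentElem F ∧ F.trace = p ∧ X = t • weightElement p q F := by
  have hs : t * (p + q) ≠ 0 := mul_ne_zero ht (by exact_mod_cast (by omega : p + q ≠ 0))
  obtain ⟨F, hXF⟩ : ∃ F, X + (t * p) • 1 = (t * (p + q)) • F := ⟨_, (smul_inv_smul₀ hs _).symm⟩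
  obtain rfl : X = t • weightElement p q F := by
    rwa [← smul_weightElement_add_smul_one, add_left_inj] at hXF
  obtain ⟨hmul, hadd, hsub⟩ := hX
  rw [smul_weightElement_sub_smul_one] at hsub hmul
  rw [smul_weightElement_add_smul_one] at hadd hmul
  have hF : IsIdempotentElem F := by
    rw [smul_mul_smul_comm, smul_eq_zero_iff_right (mul_ne_zero hs (neg_ne_zero.2 hs)), mul_sub,
      mul_one, sub_eq_zero] at hmul
    exact hmul.symm
  refine ⟨F, hF, ?_, rfl⟩
  have hrankF : F.rank ≤ p := by
    rw [← inv_smul_smul₀ hs F]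
    exact (rank_smul_le _ _).trans hadd
  have hrankF' : (1 - F).rank ≤ q := by
    rw [← inv_smul_smul₀ (neg_ne_zero.2 hs) (1 - F)]
    exact (rank_smul_le _ _).trans hsub
  have hrank : F.rank + (1 - F).rank = p + q := by
    have htr : F.trace + (1 - F).trace = (p + q : ℕ) := by
      rw [← trace_add, add_sub_cancel, trace_one, hcard]
    rw [trace_eq_rank_of_isIdempotentElem hF, trace_eq_rank_of_isIdempotentElem hF.one_sub] at htr
    exact_mod_cast htr
  rw [trace_eq_rank_of_isIdempotentElem hF]
  exact congrArg _ (by omega)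

theorem IsSpectralPair.trace_mul_self (hcard : p + q = Fintype.card ι) (hp : 0 < p)
    (hX : IsSpectralPair p q X t) : (X * X).trace = t ^ 2 * (p * q * (p + q)) := by
  rcases eq_or_ne t 0 with rfl | ht
  · simp [hX.mul_self_eq_zero]
  · obtain ⟨F, hF, htr, rfl⟩ := hX.exists_eq_smul_weightElement hcard hp ht
    rw [smul_mul_smul_comm, trace_smul, trace_weightElement_mul_self hcard hF htr,
      smul_eq_mul, pow_two]

end SpectralPairs

section ZariskiClosure

open MvPolynomial

variable {n p q : ℕ} {S : Set (Mat n)} {X : Mat n}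

/-- The point of affine `n × n`-space given by a matrix, as a ring homomorphism on polynomials in
the matrix entries. -/
def entryEval (X : Mat n) : MvPolynomial (Fin n × Fin n) ℂ →+* ℂ :=
  eval fun ij => X ij.1 ij.2

theorem mvPolynomialX_map_entryEval (X : Mat n) :
    (mvPolynomialX (Fin n) (Fin n) ℂ).map (entryEval X) = X := by
  ext i j
  simp [entryEval]

theorem entryEval_mem_pointClosure (hX : X ∈ zclosure S) :
    entryEval X ∈ pointClosure (entryEval '' S) :=
  fun f hf => hX {Y | ∀ g ∈ ({f} : Set _), entryEval Y g = 0}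
    ⟨⟨{f}, rfl⟩, fun Y hY _ hg => hg ▸ hf _ ⟨Y, hY, rfl⟩⟩ f rfl

theorem isClosed_of_zclosed (hS : zclosed S) : IsClosed S := by
  obtain ⟨T, rfl⟩ := hS
  simp only [Set.ofPred_forall]
  exact isClosed_biInter fun f _ => isClosed_eq
    (f.continuous_eval.comp (continuous_pi fun ij => continuous_id.matrix_elem ij.1 ij.2))
    continuous_const

theorem closure_subset_zclosure (S : Set (Mat n)) : closure S ⊆ zclosure S :=
  Set.subset_sInter fun _ hT => closure_minimal hT.2 (isClosed_of_zclosed hT.1)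

theorem exists_isSpectralPair_of_mem_zclosure (hpq : p + q = n) (hp : 0 < p) (hq : 0 < q)
    (hS : ∀ Y ∈ S, ∃ t, IsSpectralPair p q Y t) (hX : X ∈ zclosure S) :
    ∃ t, IsSpectralPair p q X t := by
  let G := mvPolynomialX (Fin n) (Fin n) ℂ
  let c : MvPolynomial (Fin n × Fin n) ℂ := C ((p * q * (p + q) : ℂ)⁻¹) * (G * G).trace
  let m : Polynomial (MvPolynomial (Fin n × Fin n) ℂ) := Polynomial.X ^ 2 - Polynomial.C c
  have hm : m.Monic := Polynomial.monic_X_pow_sub_C c two_ne_zero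
  have : Module.Finite (MvPolynomial (Fin n × Fin n) ℂ) (AdjoinRoot m) := hm.finite_adjoinRoot
  let W : Set (AdjoinRoot m →+* ℂ) :=
    {ψ | IsSpectralPair p q ((G.map (algebraMap _ (AdjoinRoot m))).map ψ) (ψ (.root m))}
  have map_generic {ψ : AdjoinRoot m →+* ℂ} {Y : Mat n}
      (hψ : ψ.comp (algebraMap _ (AdjoinRoot m)) = entryEval Y) :
      (G.map (algebraMap _ (AdjoinRoot m))).map ψ = Y := by
    rw [Matrix.map_map, ← RingHom.coe_comp, hψ, mvPolynomialX_map_entryEval]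
  have lift_point : entryEval '' S ⊆ (fun ψ => ψ.comp (algebraMap _ (AdjoinRoot m))) '' W := by
    rintro _ ⟨Y, hY, rfl⟩
    obtain ⟨t, ht⟩ := hS Y hY
    have hc : entryEval Y c = t ^ 2 := by
      have hne : (p * q * (p + q) : ℂ) ≠ 0 := by exact_mod_cast (by positivity)
      have hGG : entryEval Y (G * G).trace = (Y * Y).trace := by
        rw [AddMonoidHom.map_trace, Matrix.map_mul, mvPolynomialX_map_entryEval]
      rw [map_mul, hGG, ht.trace_mul_self (by simpa) hp, mul_comm, entryEval, eval_C,
        mul_inv_cancel_right₀ hne]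
    have hroot : m.eval₂ (entryEval Y) t = 0 := by simp [m, hc]
    have hlift := AdjoinRoot.lift_comp_of hroot
    refine ⟨AdjoinRoot.lift (entryEval Y) t hroot, ?_, hlift⟩
    change IsSpectralPair p q _ _
    rwa [map_generic hlift, AdjoinRoot.lift_root]
  obtain ⟨ψ, hψ, hψX⟩ := exists_mem_pointClosure_comp_algebraMap_eq
    (pointClosure_mono lift_point (entryEval_mem_pointClosure hX))
  exact ⟨ψ (.root m), map_generic hψX ▸ .of_mem_pointClosure hψ fun _ h => h⟩

end ZariskiClosure

section Conjugation

variable {ι K : Type*} [Fintype ι] [DecidableEq ι] [Field K] {p q : ℕ} {E F : Matrix ι ι K}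

theorem weightElement_conj (p q : ℕ) (E : Matrix ι ι K) (g : GL ι K) :
    weightElement p q (g * E * (g⁻¹ : GL ι K) : Matrix ι ι K)
      = g * weightElement p q E * (g⁻¹ : GL ι K) := by
  simp [weightElement, mul_sub, sub_mul]

theorem idempotentCone_subset_parabolicSweep :
    idempotentCone ι K p q ⊆ parabolicSweep ι K p q := by
  rintro _ ⟨t, -, F, hF, htr, rfl⟩
  exact ⟨t, F, 0, hF, htr, mul_zero F, zero_mul F, (add_zero _).symm⟩

theorem mem_parabolicSweep_of_mul_self_eq_zero (hcard : p + q = Fintype.card ι) {X : Matrix ι ι K}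
    (hX : X * X = 0) (hrank : X.rank ≤ min p q) : X ∈ parabolicSweep ι K p q := by
  obtain ⟨F, hF, htr, hFX, hXF⟩ := exists_isIdempotentElem_trace_eq_of_mul_self_eq_zero hX hcard
    (hrank.trans (min_le_left p q)) (hrank.trans (min_le_right p q))
  exact ⟨0, F, X, hF, htr, hFX, hXF, by rw [zero_smul, zero_add]⟩

variable [CharZero K]

theorem exists_conj_eq_of_trace_eq (hE : IsIdempotentElem E) (hF : IsIdempotentElem F)
    (htr : E.trace = F.trace) : ∃ g : GL ι K, F = g * E * (g⁻¹ : GL ι K) := by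
  obtain ⟨g, hg⟩ := isConj_of_trace_eq hE hF htr
  exact ⟨g, (Units.eq_mul_inv_iff_mul_eq g).2 hg.eq.symm⟩

theorem idempotentCone_eq_setOf_conj (hE : IsIdempotentElem E) (htr : E.trace = p) :
    idempotentCone ι K p q = {X | ∃ t : K, t ≠ 0 ∧ ∃ g : GL ι K,
      X = t • (g * weightElement p q E * (g⁻¹ : GL ι K))} := by
  ext X
  constructor
  · rintro ⟨t, ht, F, hF, htrF, rfl⟩
    obtain ⟨g, rfl⟩ := exists_conj_eq_of_trace_eq hE hF (htr.trans htrF.symm)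
    exact ⟨t, ht, g, by rw [weightElement_conj]⟩
  · rintro ⟨t, ht, g, rfl⟩
    exact ⟨t, ht, _, isIdempotentElem_units_conj hE g, (trace_units_conj g E).trans htr,
      by rw [weightElement_conj]⟩

theorem parabolicSweep_eq_setOf_conj (hE : IsIdempotentElem E) (htr : E.trace = p) :
    parabolicSweep ι K p q = {X | ∃ (t : K) (N : Matrix ι ι K) (g : GL ι K),
      (E * N = N ∧ N * E = 0) ∧ X = g * (t • weightElement p q E + N) * (g⁻¹ : GL ι K)} := by
  ext X
  constructor
  · rintro ⟨t, F, N, hF, htrF, hFN, hNF, rfl⟩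
    obtain ⟨g, rfl⟩ := exists_conj_eq_of_trace_eq hE hF (htr.trans htrF.symm)
    refine ⟨t, (g⁻¹ : GL ι K) * N * g, g, ⟨?_, ?_⟩, ?_⟩
    · nth_rw 2 [← hFN]
      simp [mul_assoc]
    · simpa [mul_assoc] using congrArg (fun Y => (g⁻¹ : GL ι K).val * Y * g.val) hNF
    · simp only [mul_add, add_mul, mul_smul_comm, smul_mul_assoc, weightElement_conj]
      simp [mul_assoc]
  · rintro ⟨t, N, g, ⟨hEN, hNE⟩, rfl⟩
    refine ⟨t, _, g * N * (g⁻¹ : GL ι K), isIdempotentElem_units_conj hE g,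
      (trace_units_conj g E).trans htr, ?_, ?_, ?_⟩
    · nth_rw 2 [← hEN]
      simp [mul_assoc]
    · simpa [mul_assoc] using congrArg (fun Y => g.val * Y * (g⁻¹ : GL ι K).val) hNE
    · simp only [mul_add, add_mul, mul_smul_comm, smul_mul_assoc, weightElement_conj]

theorem smul_weightElement_add_mem_idempotentCone (hp : 0 < p) (hF : IsIdempotentElem F)
    (htr : F.trace = p) {N : Matrix ι ι K} (hFN : F * N = N) (hNF : N * F = 0) {t : K}
    (ht : t ≠ 0) : t • weightElement p q F + N ∈ idempotentCone ι K p q := by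
  have hs : t * (p + q) ≠ 0 := mul_ne_zero ht (by exact_mod_cast (by omega : p + q ≠ 0))
  have htrN : N.trace = 0 := by rw [← hFN, trace_mul_comm, hNF, trace_zero]
  refine ⟨t, ht, F + (t * (p + q))⁻¹ • N, isIdempotentElem_add_of_mul_eq hF ?_ ?_, ?_, ?_⟩
  · rw [mul_smul_comm, hFN]
  · rw [smul_mul_assoc, hNF, smul_zero]
  · rw [trace_add, trace_smul, htrN, smul_zero, add_zero, htr]
  · rw [← add_left_inj ((t * p) • (1 : Matrix ι ι K)), smul_weightElement_add_smul_one, smul_add,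
      smul_inv_smul₀ hs, ← smul_weightElement_add_smul_one, add_right_comm]

end Conjugation

section Closure

variable {n p q : ℕ}

theorem parabolicSweep_subset_zclosure (hp : 0 < p) :
    parabolicSweep (Fin n) ℂ p q ⊆ zclosure (idempotentCone (Fin n) ℂ p q) := by
  rintro _ ⟨t, F, N, hF, htr, hFN, hNF, rfl⟩
  refine closure_subset_zclosure _ <| map_mem_closure (s := {0}ᶜ)
    (f := fun s : ℂ => s • weightElement p q F + N) (by fun_prop) (dense_compl_singleton 0 t) ?_
  exact fun s hs => smul_weightElement_add_mem_idempotentCone hp hF htr hFN hNF hs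

theorem zclosure_idempotentCone_subset (hpq : p + q = n) (hp : 0 < p) (hq : 0 < q) :
    zclosure (idempotentCone (Fin n) ℂ p q) ⊆
      idempotentCone (Fin n) ℂ p q ∪ {X | X.trace = 0 ∧ X * X = 0 ∧ X.rank ≤ min p q} := by
  have hcard : p + q = Fintype.card (Fin n) := by simpa
  have hpair : ∀ Y ∈ idempotentCone (Fin n) ℂ p q, ∃ t, IsSpectralPair p q Y t := by
    rintro _ ⟨t, -, F, hF, htr, rfl⟩
    exact ⟨t, isSpectralPair_smul_weightElement hcard hF htr t⟩
  intro X hX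
  obtain ⟨t, ht⟩ := exists_isSpectralPair_of_mem_zclosure hpq hp hq hpair hX
  rcases eq_or_ne t 0 with rfl | ht0
  · have hsq := ht.mul_self_eq_zero
    have htr := isNilpotent_trace_of_isNilpotent ⟨2, (pow_two X).trans hsq⟩
    exact .inr ⟨htr.eq_zero, hsq, ht.rank_le_min⟩
  · exact .inl ⟨t, ht0, ht.exists_eq_smul_weightElement hcard hp ht0⟩

end Closure

section BlockProjection

variable {n p q : ℕ}

/-- The diagonal matrix projecting onto the first `p` coordinates. -/
def blockProjection (n p : ℕ) : Mat n :=
  diagonal fun i => if (i : ℕ) < p then 1 else 0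

theorem isIdempotentElem_blockProjection (n p : ℕ) : IsIdempotentElem (blockProjection n p) := by
  simp [IsIdempotentElem, blockProjection]

theorem trace_blockProjection (hp : p ≤ n) : (blockProjection n p).trace = p := by
  simp [blockProjection, trace_diagonal, Fin.card_filter_val_lt, hp]

theorem weightElement_blockProjection (n p q : ℕ) :
    weightElement p q (blockProjection n p)
      = diagonal fun i : Fin n => if (i : ℕ) < p then (q : ℂ) else -(p : ℂ) := by
  ext i j
  rcases eq_or_ne i j with rfl | hij
  · by_cases hi : (i : ℕ) < p <;> simp [weightElement, blockProjection, hi]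
  · simp [weightElement, blockProjection, hij]

theorem blockProjection_mul_eq_self_and_mul_eq_zero_iff {N : Mat n} :
    blockProjection n p * N = N ∧ N * blockProjection n p = 0 ↔
      ∀ i j : Fin n, ¬((i : ℕ) < p ∧ p ≤ (j : ℕ)) → N i j = 0 := by
  simp only [blockProjection, ← Matrix.ext_iff, diagonal_mul, mul_diagonal, ite_mul, one_mul,
    zero_mul, mul_ite, mul_one, mul_zero, Matrix.zero_apply]
  grind

end BlockProjection

theorem stmt_0 (n p q : ℕ) (hn : 2 ≤ n) (hp : 1 ≤ p) (hq : 1 ≤ q) (hpq : p + q = n)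
    (lam : Mat n)
    (hlam : lam = Matrix.diagonal fun i : Fin n => if (i : ℕ) < p then (q : ℂ) else -(p : ℂ))
    (C : Set (Mat n))
    (hC : C = {X | ∃ t : ℂ, t ≠ 0 ∧ ∃ g : Matrix.GeneralLinearGroup (Fin n) ℂ,
      X = t • ((g : Mat n) * lam * ((↑g⁻¹ : Mat n)))})
    (pu : Set (Mat n))
    (hpu : pu = {N : Mat n | ∀ i j : Fin n, ¬ ((i : ℕ) < p ∧ p ≤ (j : ℕ)) → N i j = 0}) :
    zclosure C =
      {X | ∃ (t : ℂ) (N : Mat n) (g : Matrix.GeneralLinearGroup (Fin n) ℂ), N ∈ pu ∧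
        X = (g : Mat n) * (t • lam + N) * (↑g⁻¹ : Mat n)} ∧
    zclosure C = C ∪ {X | X.trace = 0 ∧ X * X = 0 ∧ X.rank ≤ min p q} := by
  have hidem := isIdempotentElem_blockProjection n p
  have htr : (blockProjection n p).trace = p := trace_blockProjection (by omega)
  obtain rfl : C = idempotentCone (Fin n) ℂ p q := by
    rw [hC, hlam, idempotentCone_eq_setOf_conj hidem htr, weightElement_blockProjection]
  have hsweep : {X | ∃ (t : ℂ) (N : Mat n) (g : GL (Fin n) ℂ), N ∈ pu ∧
      X = (g : Mat n) * (t • lam + N) * (↑g⁻¹ : Mat n)} = parabolicSweep (Fin n) ℂ p q := by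
    simp only [hpu, hlam, parabolicSweep_eq_setOf_conj hidem htr, weightElement_blockProjection,
      blockProjection_mul_eq_self_and_mul_eq_zero_iff, Set.mem_ofPred_eq]
  have hclosure := zclosure_idempotentCone_subset hpq hp hq
  have hunion : idempotentCone (Fin n) ℂ p q ∪ {X | X.trace = 0 ∧ X * X = 0 ∧ X.rank ≤ min p q} ⊆
      parabolicSweep (Fin n) ℂ p q :=
    Set.union_subset idempotentCone_subset_parabolicSweep fun X hX =>
      mem_parabolicSweep_of_mul_self_eq_zero (by simpa) hX.2.1 hX.2.2
  have hsub : parabolicSweep (Fin n) ℂ p q ⊆ zclosure (idempotentCone (Fin n) ℂ p q) :=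
    parabolicSweep_subset_zclosure hp
  rw [hsweep]
  exact ⟨(hclosure.trans hunion).antisymm hsub, hclosure.antisymm (hunion.trans hsub)⟩
end
end

section
/- Let n ≥ 4 and for X ∈ sl_n(ℂ) put μ(X) = X_{n,1}·X_{n−1,2} − X_{n−1,1}·X_{n,2}. Let I be the ideal of the algebra ℂ[sl_n] of polynomial functions on sl_n(ℂ) generated by the polynomial functions X ↦ μ(g·X·g⁻¹) for all g ∈ GL_n(ℂ). Then I is a prime ideal; consequently I equals the full ideal of polynomial functions vanishing on the Zariski closure of the cone {t·g·diag(n−1,−1,…,−1)·g⁻¹ : t ∈ ℂ∖{0}, g ∈ GL_n(ℂ)}. -/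
open Matrix

noncomputable section

abbrev GLn (n : ℕ) := Matrix.GeneralLinearGroup (Fin n) ℂ

/-- The set of traceless `n×n` complex matrices, i.e. `sl_n(ℂ)`. -/
def slS (n : ℕ) : Set (Mat n) := {X | X.trace = 0}

/-- The algebra `ℂ[sl_n]` of polynomial functions on `sl_n(ℂ)`: the subalgebra of all
functions `sl_n → ℂ` generated by the matrix-entry coordinate functions. -/
def polyFns (n : ℕ) : Subalgebra ℂ (↥(slS n) → ℂ) :=
  Algebra.adjoin ℂ {p | ∃ i j : Fin n, p = fun X => X.1 i j}

/-- A subset of `sl_n(ℂ)` is Zariski closed if it is the common zero locus of a family of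
polynomial functions on `sl_n(ℂ)`. -/
def slZclosed (n : ℕ) (C : Set ↥(slS n)) : Prop :=
  ∃ T : Set (↥(slS n) → ℂ), T ⊆ (polyFns n : Set (↥(slS n) → ℂ)) ∧
    C = {X | ∀ p ∈ T, p X = 0}

/-- The Zariski closure of a subset of `sl_n(ℂ)`. -/
def slZclosure (n : ℕ) (C : Set ↥(slS n)) : Set ↥(slS n) :=
  ⋂₀ {D | slZclosed n D ∧ C ⊆ D}

/-!
At the point of the cone with scaling factor `s`, the matrix `X + s • 1` has rank one. While `s`
is not a polynomial in the entries of `X`, the expressions `s ^ 2`, `s • X` and `s ^ 3` are, so the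
`2 × 2` minors of `X + s • 1` become equations in `X`. Conjugating the given minor by permutation
matrices and transvections shows that `I` contains all of them.

Conversely, let `B` be the quotient by these equations. In `B` the entries of `X` and of the
polynomial matrix `s • X` satisfy `X i j * (s • X) k l = X k l * (s • X) i j`. Since the Koszul
relations are the only relations between the variables, this makes multiplication by `s` well
defined on the ideal generated by the entries of `X`, and hence `B` embeds into a ring in which
`s ^ 2` has a square root `w` with `w • X = s • X`. There all `2 × 2` minors of `X + w • 1` vanish,
so by the equations of the Segre variety every polynomial that vanishes on the traceless parts of
the matrices `u vᵀ` vanishes at `X`. Thus `I` corresponds to the kernel of the comorphism of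
`(u, v) ↦ tracelessPart (u vᵀ)`. This kernel is prime because the comorphism maps into a polynomial
ring, and it is the vanishing ideal of the cone because generic pairs `(u, v)` are mapped into the
cone.
-/

section MonomialMaps

open MvPolynomial

variable {R σ : Type*} [CommRing R]

theorem exists_linearMap_monomial_eq {N κ : Type*} [AddCommGroup N] [Module R N]
    {e : κ → σ →₀ ℕ} {φ : κ → N} (hφ : φ.FactorsThrough e) :
    ∃ τ : MvPolynomial σ R →ₗ[R] N, ∀ k, τ (monomial (e k) 1) = φ k := by
  refine ⟨(basisMonomials σ R).constr R (Function.extend e φ 0), fun k => ?_⟩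
  have h := (basisMonomials σ R).constr_basis R (Function.extend e φ 0) (e k)
  rwa [coe_basisMonomials, hφ.extend_apply] at h

theorem exists_linearMap_X_mul {N : Type*} [AddCommGroup N] [Module R N]
    [Module (MvPolynomial σ R) N] [IsScalarTower R (MvPolynomial σ R) N] (P : σ → N)
    (hP : ∀ i j, (X i : MvPolynomial σ R) • P j = (X j : MvPolynomial σ R) • P i) :
    ∃ τ : MvPolynomial σ R →ₗ[R] N, ∀ i f, τ (X i * f) = f • P i := by
  let quotients (p : σ × (σ →₀ ℕ)) : N := monomial p.2 (1 : R) • P p.1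
  have factors : quotients.FactorsThrough fun p => Finsupp.single p.1 1 + p.2 := by
    rintro ⟨i, m⟩ ⟨j, m'⟩ (h : Finsupp.single i 1 + m = Finsupp.single j 1 + m')
    obtain rfl | hij := eq_or_ne i j
    · rw [add_left_cancel h]
    have hj : m j ≠ 0 := by
      have := DFunLike.congr_fun h j
      simp only [Finsupp.add_apply, Finsupp.single_eq_of_ne' hij, Finsupp.single_eq_same] at this
      lia
    obtain ⟨d, rfl⟩ := le_iff_exists_add.mp
      (Finsupp.single_le_iff.mpr (Nat.one_le_iff_ne_zero.mpr hj))
    obtain rfl : Finsupp.single i 1 + d = m' := by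
      rwa [add_left_comm, add_right_inj] at h
    have X_mul_monomial (k) :
        (monomial (Finsupp.single k 1 + d) 1 : MvPolynomial σ R) = monomial d 1 * X k := by
      rw [X, monomial_mul, one_mul, add_comm]
    simp only [quotients, X_mul_monomial, mul_smul, hP j i]
  obtain ⟨τ, hτ⟩ := exists_linearMap_monomial_eq (R := R) factors
  refine ⟨τ, fun i f => ?_⟩
  induction f using MvPolynomial.induction_on' with
  | monomial m a =>
    have monomial_eq_smul : monomial m a = a • (monomial m 1 : MvPolynomial σ R) := by
      rw [smul_monomial, smul_eq_mul, mul_one]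
    rw [monomial_eq_smul, mul_smul_comm, map_smul, smul_assoc, X, monomial_mul, one_mul,
      hτ (i, m)]
  | add f g hf hg => rw [mul_add, map_add, hf, hg, add_smul]

/-- The Koszul syzygies generate all linear relations between the variables. -/
theorem eq_zero_of_mem_span_X_prod {N : Type*} [AddCommGroup N] [Module R N]
    [Module (MvPolynomial σ R) N] [IsScalarTower R (MvPolynomial σ R) N] {P : σ → N}
    (hP : ∀ i j, (X i : MvPolynomial σ R) • P j = (X j : MvPolynomial σ R) • P i) {b : N}
    (hb : (0, b) ∈ Submodule.span (MvPolynomial σ R)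
      (Set.range fun i => ((X i : MvPolynomial σ R), P i))) : b = 0 := by
  obtain ⟨τ, hτ⟩ := exists_linearMap_X_mul P hP
  have τ_mul_fst : ∀ z ∈ Submodule.span (MvPolynomial σ R)
      (Set.range fun i => ((X i : MvPolynomial σ R), P i)), ∀ f, τ (f * z.1) = f • z.2 := by
    intro z hz
    induction hz using Submodule.span_induction with
    | mem z hz =>
      obtain ⟨i, rfl⟩ := hz
      exact fun f => by rw [mul_comm, hτ]
    | zero => simp
    | add y z _ _ hy hz => exact fun f => by simp [mul_add, hy, hz]
    | smul g z _ hz => exact fun f => by simpa [mul_assoc, mul_smul] using hz (f * g)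
  simpa using (τ_mul_fst _ hb 1).symm

variable {α β : Type*}

theorem Segre.prod_map_eq_of_marginals_eq {C : Type*} [CommMonoid C] {Y : α × β → C}
    (hY : ∀ i j k l, Y (i, j) * Y (k, l) = Y (i, l) * Y (k, j)) {s t : Multiset (α × β)}
    (hfst : s.map Prod.fst = t.map Prod.fst) (hsnd : s.map Prod.snd = t.map Prod.snd) :
    (s.map Y).prod = (t.map Y).prod := by
  induction s using Multiset.induction_on generalizing t with
  | empty =>
    obtain rfl : t = 0 := by simpa using hfst.symm
    rfl
  | cons p s ih =>
    obtain ⟨i, j⟩ := p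
    by_cases hmem : (i, j) ∈ t
    · obtain ⟨t, rfl⟩ := Multiset.exists_cons_of_mem hmem
      simp only [Multiset.map_cons, Multiset.prod_cons, Multiset.cons_inj_right] at *
      rw [ih hfst hsnd]
    have hi : i ∈ t.map Prod.fst := by simp [← hfst]
    have hj : j ∈ t.map Prod.snd := by simp [← hsnd]
    obtain ⟨⟨i, l⟩, hil, rfl⟩ := Multiset.mem_map.mp hi
    obtain ⟨⟨k, j⟩, hkj, rfl⟩ := Multiset.mem_map.mp hj
    obtain ⟨t, rfl⟩ := Multiset.exists_cons_of_mem hil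
    obtain ⟨t, rfl⟩ := Multiset.exists_cons_of_mem
      ((Multiset.mem_cons.mp hkj).resolve_left fun h => hmem (by simp_all))
    have exchange : (((i, l) ::ₘ (k, j) ::ₘ t).map Y).prod =
        Y (i, j) * (((k, l) ::ₘ t).map Y).prod := by
      simp only [Multiset.map_cons, Multiset.prod_cons, ← mul_assoc, hY i l k j]
    rw [exchange, Multiset.map_cons, Multiset.prod_cons, ih]
    · simpa using hfst
    · rw [Multiset.cons_swap] at hsnd
      simpa using hsnd

theorem Segre.aeval_eq_zero {C : Type*} [CommRing C] [Algebra R C] {Y : α × β → C}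
    (hY : ∀ i j k l, Y (i, j) * Y (k, l) = Y (i, l) * Y (k, j)) {F : MvPolynomial (α × β) R}
    (hF : aeval (fun p => (X (Sum.inl p.1) * X (Sum.inr p.2) : MvPolynomial (α ⊕ β) R)) F = 0) :
    aeval Y F = 0 := by
  let segre := aeval (R := R)
    (fun p : α × β => (X (Sum.inl p.1) * X (Sum.inr p.2) : MvPolynomial (α ⊕ β) R))
  let marginals (m : α × β →₀ ℕ) : α ⊕ β →₀ ℕ :=
    (m.mapDomain Prod.fst).sumElim (m.mapDomain Prod.snd)
  have segre_monomial (m) : segre (monomial m 1) = monomial (marginals m) 1 := by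
    rw [aeval_monomial, map_one, one_mul, monomial_eq, map_one, one_mul, Finsupp.prod_sumElim,
      Finsupp.prod_mapDomain_index (by simp) (by simp [pow_add]),
      Finsupp.prod_mapDomain_index (by simp) (by simp [pow_add]), ← Finsupp.prod_mul]
    simp only [mul_pow, Function.comp_apply]
  have aeval_Y_monomial (m : α × β →₀ ℕ) :
      aeval Y (monomial m (1 : R)) = (m.toMultiset.map Y).prod := by
    rw [aeval_monomial, map_one, one_mul, Finsupp.toMultiset_map, Finsupp.prod_toMultiset,
      Finsupp.prod_mapDomain_index (by simp) (by simp [pow_add])]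
  have factors : (fun m => aeval Y (monomial m (1 : R))).FactorsThrough marginals := by
    intro m m' h
    have hfst := congrArg (Finsupp.comapDomain Sum.inl · Sum.inl_injective.injOn) h
    have hsnd := congrArg (Finsupp.comapDomain Sum.inr · Sum.inr_injective.injOn) h
    simp only [marginals, Finsupp.comapDomain_inl_sumElim,
      Finsupp.comapDomain_inr_sumElim] at hfst hsnd
    simp only [aeval_Y_monomial]
    apply Segre.prod_map_eq_of_marginals_eq hY <;> simp only [Finsupp.toMultiset_map, hfst, hsnd]
  obtain ⟨descend, hdescend⟩ := exists_linearMap_monomial_eq (R := R) factors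
  have descend_comp_segre : descend ∘ₗ segre.toLinearMap = (aeval Y).toLinearMap := by
    refine (basisMonomials (α × β) R).ext fun m => ?_
    simp only [coe_basisMonomials, LinearMap.comp_apply, AlgHom.toLinearMap_apply, segre_monomial,
      hdescend]
  rw [← AlgHom.toLinearMap_apply, ← descend_comp_segre, LinearMap.comp_apply,
    AlgHom.toLinearMap_apply, show segre F = 0 from hF, map_zero]

end MonomialMaps

universe u

/-- If `(a, b) ∈ Γ` means that multiplication by the missing square root sends `a` to `b`, the
relations to be imposed on `x + y * √q` are exactly those with `(y, -x) ∈ Γ`. -/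
theorem exists_sqrt_extension {B : Type u} [CommRing B] {q : B} {Γ : Submodule B (B × B)}
    (single_valued : ∀ b, (0, b) ∈ Γ → b = 0) (iterate : ∀ a b, (a, b) ∈ Γ → (b, q * a) ∈ Γ) :
    ∃ (C : Type u) (_ : CommRing C) (_ : Algebra B C) (w : C),
      Function.Injective (algebraMap B C) ∧ w * w = algebraMap B C q ∧
        ∀ a b, (a, b) ∈ Γ → w * algebraMap B C a = algebraMap B C b := by
  let J : Ideal (QuadraticAlgebra B q 0) :=
    { carrier := {z | (z.im, -z.re) ∈ Γ}
      zero_mem' := by simp [Prod.mk_zero_zero]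
      add_mem' := fun {y z} hy hz => by
        simpa [add_comm] using Γ.add_mem hy hz
      smul_mem' := fun c z hz => by
        change ((c * z).im, -(c * z).re) ∈ Γ
        convert Γ.add_mem (Γ.smul_mem c.re hz) (Γ.smul_mem (-c.im) (iterate _ _ hz)) using 1
        ext
        · simp
        · simp
          ring }
  have mem_J (z) : z ∈ J ↔ (z.im, -z.re) ∈ Γ := Iff.rfl
  have algebraMap_eq (b : B) : algebraMap B (QuadraticAlgebra B q 0 ⧸ J) b =
      Ideal.Quotient.mk J (algebraMap B _ b) := rfl
  refine ⟨QuadraticAlgebra B q 0 ⧸ J, inferInstance, inferInstance,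
    Ideal.Quotient.mk J ⟨0, 1⟩, ?_, ?_, fun a b hab => ?_⟩
  · refine (injective_iff_map_eq_zero _).mpr fun b hb => ?_
    rw [algebraMap_eq, Ideal.Quotient.eq_zero_iff_mem, mem_J] at hb
    exact neg_eq_zero.mp (single_valued _ (by simpa using hb))
  · rw [algebraMap_eq, ← map_mul]
    congr 1
    ext <;> simp
  · rw [algebraMap_eq, algebraMap_eq, ← map_mul, Ideal.Quotient.mk_eq_mk_iff_sub_mem, mem_J]
    simpa using hab

section MixedMinor

variable {m n B : Type*} [CommRing B]

/-- The determinant of the `2 × 2` matrix whose rows are row `i` of `M` and row `k` of `N`,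
restricted to the columns `a` and `b`. It polarizes the minor `mixedMinor M M i k a b`. -/
def mixedMinor (M N : Matrix m n B) (i k : m) (a b : n) : B :=
  M i a * N k b - N k a * M i b

theorem sum_mul_mixedMinor [Fintype m] (L : Matrix m m B) (M N : Matrix m n B) (i j : m)
    (a b : n) : ∑ k, L j k * mixedMinor M N i k a b = mixedMinor M (L * N) i j a b := by
  simp only [mixedMinor, Matrix.mul_apply, Finset.mul_sum, Finset.sum_mul,
    ← Finset.sum_sub_distrib]
  exact Finset.sum_congr rfl fun k _ => by ring

theorem sum_mixedMinor [Fintype m] (M N : Matrix m m B) (k b : m) :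
    ∑ i, mixedMinor M N i k i b = M.trace * N k b - (N * M) k b := by
  simp only [mixedMinor, Matrix.trace, Matrix.diag_apply, Matrix.mul_apply, Finset.sum_mul,
    Finset.sum_sub_distrib]

end MixedMinor

theorem map_mvPolynomialX_aeval {m n R S : Type*} [CommSemiring R] [CommSemiring S] [Algebra R S]
    (Y : Matrix m n S) :
    (Matrix.mvPolynomialX m n R).map (MvPolynomial.aeval (R := R) fun p => Y p.1 p.2) = Y := by
  ext i j
  rw [Matrix.map_apply, Matrix.mvPolynomialX_apply, MvPolynomial.aeval_X]

theorem map_one_apply {n R S : Type*} [DecidableEq n] [Semiring R] [Semiring S] (f : R →+* S)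
    (i j : n) : f ((1 : Matrix n n R) i j) = (1 : Matrix n n S) i j := by
  rw [Matrix.one_apply, Matrix.one_apply, apply_ite f, map_one, map_zero]

section Shift

open Fintype (card)

variable {ι B C : Type*} [Fintype ι] [CommRing B] [Algebra ℚ B] [CommRing C] [Algebra ℚ C]

theorem isUnit_natCast_sub {n k : ℕ} (h : k < n) : IsUnit ((n : B) - k) := by
  have : (n - k : ℚ) ≠ 0 := sub_ne_zero_of_ne (mod_cast h.ne')
  simpa using this.isUnit.map (algebraMap ℚ B)

theorem natCast_mul_sub_one_mul_inv_smul {n : ℕ} (hn : 2 ≤ n) (b : B) :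
    (n : B) * (n - 1) * ((n * (n - 1) : ℚ)⁻¹ • b) = b := by
  have h : (n * (n - 1) : ℚ) ≠ 0 := by
    have : (2 : ℚ) ≤ n := mod_cast hn
    exact mul_ne_zero (by linarith) (by linarith)
  have algebraMap_eq : (n : B) * (n - 1) = algebraMap ℚ B (n * (n - 1)) := by simp
  rw [algebraMap_eq, ← Algebra.smul_def, smul_inv_smul₀ h]

theorem inv_natCast_smul_mul_natCast {n : ℕ} (hn : n ≠ 0) (b : B) : ((n : ℚ)⁻¹ • b) * n = b := by
  rw [mul_comm, ← nsmul_eq_mul, ← Nat.cast_smul_eq_nsmul ℚ, smul_inv_smul₀ (mod_cast hn)]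

variable (X : Matrix ι ι B)

/-- The polynomial in the entries of `X` that equals `s ^ 2` when `X + s • 1` has rank at most
one and trace `n * s`. -/
def shiftSq : B :=
  (card ι * (card ι - 1) : ℚ)⁻¹ • (X * X).trace

theorem shiftSq_transpose : shiftSq Xᵀ = shiftSq X := by
  rw [shiftSq, shiftSq, ← Matrix.transpose_mul, Matrix.trace_transpose]

theorem map_shiftSq (f : B →+* C) : f (shiftSq X) = shiftSq (X.map f) := by
  rw [shiftSq, shiftSq, map_rat_smul, AddMonoidHom.map_trace, Matrix.map_mul]

theorem card_mul_shiftSq {X : Matrix ι ι B} (hι : 2 ≤ card ι) :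
    (card ι : B) * (card ι - 1) * shiftSq X = (X * X).trace :=
  natCast_mul_sub_one_mul_inv_smul hι _

variable [DecidableEq ι]

/-- The matrix of polynomials in the entries of `X` that equals `s • X` when `X + s • 1` has rank
at most one and trace `n * s`. -/
def shiftMul : Matrix ι ι B :=
  (card ι - 2 : ℚ)⁻¹ • (X * X - ((card ι - 1 : B) * shiftSq X) • (1 : Matrix ι ι B))

/-- The polynomial in the entries of `X` that equals `s ^ 3` when `X + s • 1` has rank at most
one and trace `n * s`. -/
def shiftCube : B :=
  (card ι * (card ι - 1) : ℚ)⁻¹ • (X * shiftMul X).trace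

/-- The `2 × 2` minors of `X + s • 1`, with `s • X` and `s ^ 2` replaced by the corresponding
polynomials in the entries of `X`. -/
def shiftedMinor (i k a b : ι) : B :=
  mixedMinor X X i k a b + mixedMinor 1 (shiftMul X) i k a b + mixedMinor (shiftMul X) 1 i k a b +
    shiftSq X * mixedMinor 1 1 i k a b

variable {X}

theorem map_shiftMul (f : B →+* C) : (shiftMul X).map f = shiftMul (X.map f) := by
  have map_smul_one (b : B) : (b • (1 : Matrix ι ι B)).map f = f b • (1 : Matrix ι ι C) := by
    rw [Matrix.map_smul' _ _ _ (map_mul f), Matrix.map_one _ (map_zero f) (map_one f)]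
  rw [shiftMul, shiftMul, ← map_shiftSq,
    Matrix.map_smul f (_ : ℚ) (map_rat_smul f _), Matrix.map_sub _ (map_sub f), Matrix.map_mul,
    map_smul_one]
  simp

theorem map_shiftedMinor (f : B →+* C) (i k a b : ι) :
    f (shiftedMinor X i k a b) = shiftedMinor (X.map f) i k a b := by
  simp only [shiftedMinor, mixedMinor, ← map_shiftMul, ← map_shiftSq, Matrix.map_apply, map_add,
    map_sub, map_mul, map_one_apply]

variable (X)

theorem shiftMul_transpose : shiftMul Xᵀ = (shiftMul X)ᵀ := by
  simp only [shiftMul, shiftSq_transpose, Matrix.transpose_smul, Matrix.transpose_sub,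
    Matrix.transpose_mul, Matrix.transpose_one]

theorem shiftedMinor_transpose (i k a b : ι) :
    shiftedMinor Xᵀ a b i k = shiftedMinor X i k a b := by
  have one_symm (i j : ι) : (1 : Matrix ι ι B) i j = (1 : Matrix ι ι B) j i :=
    congr_fun₂ Matrix.transpose_one.symm i j
  simp only [shiftedMinor, mixedMinor, shiftMul_transpose, shiftSq_transpose,
    Matrix.transpose_apply, one_symm a, one_symm b]
  ring

theorem shiftedMinor_swap_rows (i k a b : ι) :
    shiftedMinor X k i a b = -shiftedMinor X i k a b := by
  simp only [shiftedMinor, mixedMinor]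
  ring

variable {X}

theorem card_mul_shiftCube (hι : 2 ≤ card ι) :
    (card ι : B) * (card ι - 1) * shiftCube X = (X * shiftMul X).trace :=
  natCast_mul_sub_one_mul_inv_smul hι _

theorem card_smul_shiftMul (hι : 3 ≤ card ι) :
    (card ι - 2 : B) • shiftMul X = X * X - ((card ι - 1 : B) * shiftSq X) • 1 := by
  have h : (card ι - 2 : ℚ) ≠ 0 := by
    have : (3 : ℚ) ≤ card ι := mod_cast hι
    linarith
  have algebraMap_eq : (card ι - 2 : B) = algebraMap ℚ B (card ι - 2) := by
    rw [map_sub, map_natCast, map_ofNat]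
  rw [algebraMap_eq, algebraMap_smul, shiftMul, smul_inv_smul₀ h]

theorem mul_self_eq_shiftMul (hι : 3 ≤ card ι) :
    X * X = (card ι - 2 : B) • shiftMul X + ((card ι - 1 : B) * shiftSq X) • 1 := by
  rw [card_smul_shiftMul hι, sub_add_cancel]

theorem mul_shiftMul_comm : X * shiftMul X = shiftMul X * X := by
  simp only [shiftMul, Matrix.mul_smul, Matrix.smul_mul, Matrix.mul_sub, Matrix.sub_mul,
    Matrix.mul_assoc, Matrix.mul_one, Matrix.one_mul]

theorem trace_shiftMul (hι : 2 ≤ card ι) : (shiftMul X).trace = 0 := by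
  rw [shiftMul, Matrix.trace_smul, Matrix.trace_sub, ← card_mul_shiftSq hι, Matrix.trace_smul,
    Matrix.trace_one, smul_eq_mul]
  ring_nf
  simp

variable (X) in
/-- The equations of the closure of the set of traceless matrices `X` for which some
`X + s • 1` has rank at most one. -/
structure IsShiftedRankOne : Prop where
  trace_eq_zero : X.trace = 0
  shiftedMinor_eq_zero (i k a b : ι) : shiftedMinor X i k a b = 0

namespace IsShiftedRankOne

variable (hX : IsShiftedRankOne X)

include hX

theorem transpose : IsShiftedRankOne Xᵀ where
  trace_eq_zero := by rw [Matrix.trace_transpose, hX.trace_eq_zero]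
  shiftedMinor_eq_zero i k a b := by
    rw [shiftedMinor_transpose, hX.shiftedMinor_eq_zero]

theorem row_relation (hι : 3 ≤ card ι) (i j a b : ι) :
    (card ι - 2) * mixedMinor X (shiftMul X) i j a b +
      (card ι - 1) * shiftSq X * mixedMinor X 1 i j a b +
      mixedMinor 1 (X * shiftMul X) i j a b + mixedMinor (shiftMul X) X i j a b +
      shiftSq X * mixedMinor 1 X i j a b = 0 := by
  have contracted : ∑ k, X j k * shiftedMinor X i k a b = 0 := by
    simp only [hX.shiftedMinor_eq_zero, mul_zero, Finset.sum_const_zero]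
  simp only [shiftedMinor, mul_add, Finset.sum_add_distrib, mul_left_comm _ (shiftSq X),
    ← Finset.mul_sum, sum_mul_mixedMinor, Matrix.mul_one] at contracted
  rw [← contracted, mul_self_eq_shiftMul hι]
  simp only [mixedMinor, Matrix.add_apply, Matrix.smul_apply, smul_eq_mul]
  ring

theorem swap_relation (hι : 3 ≤ card ι) (i j a b : ι) :
    (card ι - 3) * (mixedMinor X (shiftMul X) i j a b - mixedMinor (shiftMul X) X i j a b) +
      mixedMinor 1 (X * shiftMul X - ((card ι - 2) * shiftSq X) • X) i j a b -
      mixedMinor (X * shiftMul X - ((card ι - 2) * shiftSq X) • X) 1 i j a b = 0 := by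
  have h₁ := hX.row_relation hι i j a b
  have h₂ := hX.row_relation hι j i a b
  simp only [mixedMinor, Matrix.sub_apply, Matrix.smul_apply, smul_eq_mul] at h₁ h₂ ⊢
  linear_combination h₁ + h₂

theorem mul_shiftMul (hι : 3 ≤ card ι) :
    X * shiftMul X = ((card ι - 2) * shiftSq X) • X + ((card ι - 1) * shiftCube X) • 1 := by
  set U := X * shiftMul X - ((card ι - 2) * shiftSq X) • X with hU
  have trace_U : U.trace = card ι * (card ι - 1) * shiftCube X := by
    rw [hU, Matrix.trace_sub, Matrix.trace_smul, hX.trace_eq_zero, smul_zero, sub_zero,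
      card_mul_shiftCube (by lia)]
  have card_mul_U (j b) : card ι * U j b = U.trace * (1 : Matrix ι ι B) j b := by
    have contracted := Finset.sum_congr rfl fun i (_ : i ∈ Finset.univ) =>
      hX.swap_relation hι i j i b
    simp only [← hU, Finset.sum_sub_distrib, Finset.sum_add_distrib, ← Finset.mul_sum,
      sum_mixedMinor, hX.trace_eq_zero, trace_shiftMul (X := X) (by lia : 2 ≤ card ι),
      ← mul_shiftMul_comm, Matrix.trace_one, Matrix.one_mul, Matrix.mul_one,
      Finset.sum_const_zero] at contracted
    linear_combination contracted
  have U_eq : U = ((card ι - 1) * shiftCube X) • 1 := by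
    ext j b
    refine (isUnit_natCast_sub (k := 0) (by lia : 0 < card ι)).mul_left_cancel ?_
    rw [Nat.cast_zero, sub_zero, card_mul_U, trace_U, Matrix.smul_apply, smul_eq_mul]
    ring
  rw [← U_eq, hU, add_sub_cancel]

theorem mixedMinor_shiftMul_comm (hι : 4 ≤ card ι) (i j a b : ι) :
    mixedMinor X (shiftMul X) i j a b = mixedMinor (shiftMul X) X i j a b := by
  refine (isUnit_natCast_sub (by lia : 3 < card ι)).mul_left_cancel ?_
  have h := hX.swap_relation (by lia) i j a b
  rw [hX.mul_shiftMul (by lia)] at h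
  simp only [mixedMinor, Matrix.add_apply, Matrix.sub_apply, Matrix.smul_apply,
    smul_eq_mul] at h ⊢
  push_cast
  linear_combination h

theorem apply_mul_shiftMul_apply (hι : 4 ≤ card ι) (i a j b : ι) :
    X i a * shiftMul X j b = X j b * shiftMul X i a := by
  have h₁ := hX.mixedMinor_shiftMul_comm hι i j a b
  have h₂ := hX.transpose.mixedMinor_shiftMul_comm hι a b i j
  simp only [mixedMinor, shiftMul_transpose, Matrix.transpose_apply] at h₁ h₂
  have two_unit : IsUnit (2 : B) := by simpa using isUnit_natCast_sub (B := B) zero_lt_two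
  refine two_unit.mul_left_cancel ?_
  linear_combination h₁ + h₂

theorem shiftMul_minor_eq_zero (hι : 4 ≤ card ι) (i j a b : ι) :
    mixedMinor X (shiftMul X) i j a b +
      shiftSq X * (mixedMinor X 1 i j a b + mixedMinor 1 X i j a b) +
      shiftCube X * mixedMinor 1 1 i j a b = 0 := by
  refine (isUnit_natCast_sub (by lia : 1 < card ι)).mul_left_cancel ?_
  have h := hX.row_relation (by lia) i j a b
  rw [hX.mul_shiftMul (by lia), ← hX.mixedMinor_shiftMul_comm hι] at h
  simp only [mixedMinor, Matrix.add_apply, Matrix.smul_apply, smul_eq_mul] at h ⊢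
  push_cast
  linear_combination h

theorem add_smul_one_minor_eq_zero {D : Type*} [CommRing D] (f : B →+* D) {w : D}
    (hw : w * w = f (shiftSq X))
    (hwX : ∀ i j, w * f (X i j) = f (shiftMul X i j)) (i j k l : ι) :
    (X.map f + w • 1) i j * (X.map f + w • 1) k l =
      (X.map f + w • 1) i l * (X.map f + w • 1) k j := by
  have h := congr_arg f (hX.shiftedMinor_eq_zero i k j l)
  simp only [shiftedMinor, mixedMinor, map_add, map_sub, map_mul, map_zero, ← hw, ← hwX,
    map_one_apply] at h
  simp only [Matrix.add_apply, Matrix.map_apply, Matrix.smul_apply, smul_eq_mul]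
  linear_combination h

end IsShiftedRankOne

variable (X) in
/-- The ideal of the universal quotient over which `X` satisfies `IsShiftedRankOne`. -/
def shiftIdeal : Ideal B :=
  Ideal.span ({X.trace} ∪ Set.range fun p : (ι × ι) × ι × ι =>
    shiftedMinor X p.1.1 p.1.2 p.2.1 p.2.2)

theorem isShiftedRankOne_map_iff {f : B →+* C} :
    IsShiftedRankOne (X.map f) ↔ shiftIdeal X ≤ RingHom.ker f := by
  have map_trace : f X.trace = (X.map f).trace := AddMonoidHom.map_trace f X
  constructor
  · rintro ⟨trace_eq_zero, shiftedMinor_eq_zero⟩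
    refine Ideal.span_le.mpr ?_
    rintro _ (rfl | ⟨p, rfl⟩)
    · exact map_trace.trans trace_eq_zero
    · exact (map_shiftedMinor f ..).trans (shiftedMinor_eq_zero ..)
  · refine fun h => ⟨map_trace.symm.trans (h (Ideal.subset_span (.inl rfl))), fun i k a b => ?_⟩
    exact (map_shiftedMinor f ..).symm.trans (h (Ideal.subset_span (.inr ⟨((i, k), a, b), rfl⟩)))

section ShiftGraph

variable {A : Type*} [CommRing A] [Algebra A B]

/-- The graph of the partially defined multiplication by `s`, sending each entry of `X` to the
corresponding entry of `s • X`. -/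
def shiftGraph (B : Type*) [CommRing B] [Algebra ℚ B] [Algebra A B] (X : Matrix ι ι A) :
    Submodule A (A × B) :=
  Submodule.span A (Set.range fun p : ι × ι =>
    (X p.1 p.2, shiftMul (X.map (algebraMap A B)) p.1 p.2))

variable {X : Matrix ι ι A}

theorem apply_mem_shiftGraph (i j : ι) :
    (X i j, shiftMul (X.map (algebraMap A B)) i j) ∈ shiftGraph B X :=
  Submodule.subset_span ⟨(i, j), rfl⟩

theorem trace_mem_shiftGraph (hι : 2 ≤ card ι) : (X.trace, 0) ∈ shiftGraph B X := by
  have h := Submodule.sum_mem _ fun i (_ : i ∈ Finset.univ) =>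
    apply_mem_shiftGraph (B := B) (X := X) i i
  rw [← prod_mk_sum] at h
  exact trace_shiftMul (X := X.map (algebraMap A B)) hι ▸ h

theorem mul_apply_mem_shiftGraph (L : Matrix ι ι A) (i j : ι) :
    ((L * X) i j, (L.map (algebraMap A B) * shiftMul (X.map (algebraMap A B))) i j) ∈
      shiftGraph B X := by
  have h := Submodule.sum_mem _ fun k (_ : k ∈ Finset.univ) =>
    (shiftGraph B X).smul_mem (L i k) (apply_mem_shiftGraph k j)
  simp only [Prod.smul_mk, ← prod_mk_sum, Algebra.smul_def (A := B)] at h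
  exact h

theorem exists_mem_shiftGraph_of_map (hA : Function.Surjective (algebraMap A B)) {a b : B}
    (hab : (a, b) ∈ shiftGraph B (X.map (algebraMap A B))) :
    ∃ c, algebraMap A B c = a ∧ (c, b) ∈ shiftGraph B X := by
  have map_self : (X.map (algebraMap A B)).map (algebraMap B B) = X.map (algebraMap A B) :=
    Matrix.map_id _
  obtain ⟨c, hc⟩ := (Submodule.mem_span_range_iff_exists_fun B).mp hab
  choose lift map_lift using hA
  refine ⟨∑ p, lift (c p) * X p.1 p.2, ?_, ?_⟩
  · rw [Prod.ext_iff, Prod.fst_sum] at hc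
    simp only [map_sum, map_mul, map_lift]
    exact hc.1
  · rw [Prod.ext_iff, Prod.snd_sum] at hc
    rw [← show _ = b from hc.2]
    simp only [map_self, Prod.smul_snd, smul_eq_mul]
    rw [prod_mk_sum]
    refine Submodule.sum_mem _ fun p _ => ?_
    have h := (shiftGraph B X).smul_mem (lift (c p)) (apply_mem_shiftGraph p.1 p.2)
    rwa [Prod.smul_mk, smul_eq_mul, Algebra.smul_def, map_lift] at h

variable [Algebra ℚ A]

theorem shiftSq_mem_shiftGraph :
    (shiftSq X, shiftCube (X.map (algebraMap A B))) ∈ shiftGraph B X := by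
  have trace_mem : ((X * X).trace,
      (X.map (algebraMap A B) * shiftMul (X.map (algebraMap A B))).trace) ∈
      shiftGraph B X := by
    have h := Submodule.sum_mem _ fun k (_ : k ∈ Finset.univ) =>
      mul_apply_mem_shiftGraph (B := B) (X := X) X k k
    rwa [← prod_mk_sum] at h
  exact (shiftGraph B X).smul_of_tower_mem (card ι * (card ι - 1) : ℚ)⁻¹ trace_mem

theorem shiftMul_mem_shiftGraph (hι : 3 ≤ card ι)
    (hX : IsShiftedRankOne (X.map (algebraMap A B))) (i j : ι) :
    (shiftMul X i j, shiftSq (X.map (algebraMap A B)) * algebraMap A B (X i j)) ∈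
      shiftGraph B X := by
  have hn : (card ι - 2 : ℚ) ≠ 0 := by
    have : (3 : ℚ) ≤ card ι := mod_cast hι
    linarith
  have snd_eq : (X.map (algebraMap A B) * shiftMul (X.map (algebraMap A B))) i j -
      ((card ι - 1) * (1 : Matrix ι ι A) i j) • shiftCube (X.map (algebraMap A B)) =
        (card ι - 2 : ℚ) • (shiftSq (X.map (algebraMap A B)) * algebraMap A B (X i j)) := by
    rw [hX.mul_shiftMul hι, Matrix.add_apply, Matrix.smul_apply, Matrix.smul_apply,
      ← map_one_apply (algebraMap A B)]
    simp only [Matrix.map_apply, smul_eq_mul, Algebra.smul_def, map_mul, map_sub, map_natCast,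
      map_one, map_ofNat]
    ring
  have h := (shiftGraph B X).smul_of_tower_mem (card ι - 2 : ℚ)⁻¹ <|
    (shiftGraph B X).sub_mem (mul_apply_mem_shiftGraph X i j) <|
      (shiftGraph B X).smul_mem ((card ι - 1) * (1 : Matrix ι ι A) i j) shiftSq_mem_shiftGraph
  rw [Prod.smul_mk, Prod.mk_sub_mk, Prod.smul_mk, snd_eq, inv_smul_smul₀ hn] at h
  convert h using 2
  simp only [shiftMul, Matrix.smul_apply, Matrix.sub_apply, smul_eq_mul]
  ring_nf

theorem shiftedMinor_mem_shiftGraph (hι : 4 ≤ card ι)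
    (hX : IsShiftedRankOne (X.map (algebraMap A B))) (i k a b : ι) :
    (shiftedMinor X i k a b, 0) ∈ shiftGraph B X := by
  have mul_apply_mem (c : A) (i j) := (shiftGraph B X).smul_mem c (apply_mem_shiftGraph i j)
  have mul_shiftMul_mem (c : A) (i j) :=
    (shiftGraph B X).smul_mem c (shiftMul_mem_shiftGraph (by lia) hX i j)
  have minor_mem := (shiftGraph B X).sub_mem (mul_apply_mem (X i a) k b) (mul_apply_mem (X i b) k a)
  have minor_one_mem := (shiftGraph B X).add_mem
    ((shiftGraph B X).sub_mem (mul_shiftMul_mem ((1 : Matrix ι ι A) i a) k b)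
      (mul_shiftMul_mem ((1 : Matrix ι ι A) i b) k a))
    ((shiftGraph B X).sub_mem (mul_shiftMul_mem ((1 : Matrix ι ι A) k b) i a)
      (mul_shiftMul_mem ((1 : Matrix ι ι A) k a) i b))
  have shiftSq_mem := (shiftGraph B X).smul_mem (mixedMinor 1 1 i k a b)
    (shiftSq_mem_shiftGraph (B := B))
  convert (shiftGraph B X).add_mem ((shiftGraph B X).add_mem minor_mem minor_one_mem) shiftSq_mem
    using 1
  ext
  · simp only [shiftedMinor, mixedMinor, Prod.fst_add, Prod.fst_sub, Prod.smul_fst, smul_eq_mul]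
    ring
  · have h := hX.shiftMul_minor_eq_zero hι i k a b
    simp only [mixedMinor, Prod.snd_add, Prod.snd_sub, Prod.smul_snd, Algebra.smul_def (A := B),
      map_sub, map_mul, map_one_apply, Matrix.map_apply] at h ⊢
    linear_combination -h

theorem iterate_mem_shiftGraph {Y : Matrix ι ι B} (hι : 3 ≤ card ι) (hY : IsShiftedRankOne Y)
    {a b : B} (hab : (a, b) ∈ shiftGraph B Y) : (b, shiftSq Y * a) ∈ shiftGraph B Y := by
  have map_self : Y.map (algebraMap B B) = Y := Matrix.map_id Y
  let next : B × B →ₗ[B] B × B :=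
    (LinearMap.snd B B B).prod (shiftSq Y • LinearMap.fst B B B)
  suffices shiftGraph B Y ≤ (shiftGraph B Y).comap next from this hab
  refine Submodule.span_le.mpr ?_
  rintro _ ⟨p, rfl⟩
  have h := shiftMul_mem_shiftGraph (B := B) (X := Y) hι (by rwa [map_self]) p.1 p.2
  simp only [map_self] at h ⊢
  exact h

theorem mem_shiftGraph_of_mem_shiftIdeal (hι : 4 ≤ card ι)
    (hX : IsShiftedRankOne (X.map (algebraMap A B))) {a : A} (ha : a ∈ shiftIdeal X) :
    (a, 0) ∈ shiftGraph B X := by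
  suffices shiftIdeal X ≤ (shiftGraph B X).comap (LinearMap.inl A A B) from this ha
  refine Ideal.span_le.mpr ?_
  rintro _ (rfl | ⟨p, rfl⟩)
  · exact trace_mem_shiftGraph (by lia)
  · exact shiftedMinor_mem_shiftGraph hι hX _ _ _ _

end ShiftGraph

/-- The component of `M` in the traceless matrices along the scalar matrices. -/
def tracelessPart (M : Matrix ι ι B) : Matrix ι ι B :=
  M - ((card ι : ℚ)⁻¹ • M.trace) • 1

theorem map_tracelessPart (f : B →+* C) (M : Matrix ι ι B) :
    (tracelessPart M).map f = tracelessPart (M.map f) := by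
  ext i j
  simp only [tracelessPart, Matrix.map_apply, Matrix.sub_apply, Matrix.smul_apply, smul_eq_mul,
    map_sub, map_mul, map_one_apply, map_rat_smul, AddMonoidHom.map_trace]

theorem trace_tracelessPart [Nonempty ι] (M : Matrix ι ι B) : (tracelessPart M).trace = 0 := by
  rw [tracelessPart, Matrix.trace_sub, Matrix.trace_smul, Matrix.trace_one, smul_eq_mul,
    inv_natCast_smul_mul_natCast Fintype.card_ne_zero, sub_self]

theorem tracelessPart_add_smul_one [Nonempty ι] {X : Matrix ι ι B} (hX : X.trace = 0) (w : B) :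
    tracelessPart (X + w • 1) = X := by
  rw [tracelessPart, Matrix.trace_add, hX, zero_add, Matrix.trace_smul, Matrix.trace_one,
    smul_eq_mul, ← smul_mul_assoc, inv_natCast_smul_mul_natCast Fintype.card_ne_zero,
    add_sub_cancel_right]

theorem tracelessPart_apply_ne (M : Matrix ι ι B) {i j : ι} (hij : i ≠ j) :
    tracelessPart M i j = M i j := by
  rw [tracelessPart, Matrix.sub_apply, Matrix.smul_apply, Matrix.one_apply_ne hij, smul_zero,
    sub_zero]

theorem tracelessPart_smul (c : B) (M : Matrix ι ι B) :
    tracelessPart (c • M) = c • tracelessPart M := by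
  rw [tracelessPart, tracelessPart, Matrix.trace_smul, smul_sub, smul_smul, smul_eq_mul,
    mul_smul_comm]

theorem tracelessPart_units_conj (g : GL ι B) (M : Matrix ι ι B) :
    tracelessPart ((g : Matrix ι ι B) * M * (↑g⁻¹ : Matrix ι ι B)) =
      (g : Matrix ι ι B) * tracelessPart M * (↑g⁻¹ : Matrix ι ι B) := by
  rw [tracelessPart, tracelessPart, Matrix.trace_units_conj, Matrix.mul_sub, Matrix.sub_mul,
    Matrix.mul_smul, Matrix.mul_one, Matrix.smul_mul, ← Units.val_mul, mul_inv_cancel,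
    Units.val_one]

theorem tracelessPart_card_smul_single (z : ι) :
    tracelessPart ((card ι : B) • Matrix.single z z 1) =
      Matrix.diagonal fun i => if i = z then (card ι : B) - 1 else -1 := by
  have : Nonempty ι := ⟨z⟩
  have inv_card_smul : (card ι : ℚ)⁻¹ • (card ι : B) = 1 := by
    simpa using inv_natCast_smul_mul_natCast (B := B) (Fintype.card_ne_zero (α := ι)) 1
  rw [tracelessPart, Matrix.trace_smul, Matrix.trace_single_eq_same, smul_eq_mul, mul_one,
    inv_card_smul, one_smul]
  rw [Matrix.smul_single, smul_eq_mul, mul_one, ← Matrix.diagonal_single, ← Matrix.diagonal_one,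
    Matrix.diagonal_sub]
  congr 1
  ext i
  rw [Pi.single_apply]
  split_ifs <;> ring

theorem algHom_aeval_tracelessPart {R S : Type*} [CommRing R] [CommRing S] [Algebra ℚ S]
    [Algebra R S] [Algebra R C] (f : S →ₐ[R] C) (Y : Matrix ι ι S) (F : MvPolynomial (ι × ι) R) :
    f (MvPolynomial.aeval (fun p => tracelessPart Y p.1 p.2) F) =
      MvPolynomial.aeval (fun p => tracelessPart (Y.map f) p.1 p.2) F := by
  have map_eq : (tracelessPart Y).map f = tracelessPart (Y.map f) :=
    map_tracelessPart (f : S →+* C) Y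
  rw [← AlgHom.comp_apply, MvPolynomial.comp_aeval, ← map_eq]
  rfl

section Generic

variable {R : Type*} [CommRing R] [Algebra ℚ R]

theorem eq_zero_of_mem_shiftGraph [Algebra R B] [Algebra (MvPolynomial (ι × ι) R) B]
    [IsScalarTower R (MvPolynomial (ι × ι) R) B] (hι : 4 ≤ card ι)
    (hsurj : Function.Surjective (algebraMap (MvPolynomial (ι × ι) R) B))
    (hker : RingHom.ker (algebraMap (MvPolynomial (ι × ι) R) B) =
      shiftIdeal (Matrix.mvPolynomialX ι ι R)) {b : B}
    (hb : (0, b) ∈ shiftGraph B ((Matrix.mvPolynomialX ι ι R).map (algebraMap _ B))) :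
    b = 0 := by
  have hX := isShiftedRankOne_map_iff.mpr hker.ge
  obtain ⟨c, hc, hcb⟩ := exists_mem_shiftGraph_of_map hsurj hb
  have hc₀ := mem_shiftGraph_of_mem_shiftIdeal hι hX (hker ▸ RingHom.mem_ker.mpr hc)
  refine eq_zero_of_mem_span_X_prod (R := R) (fun p q => ?_)
    (show (0, b) ∈ shiftGraph B (Matrix.mvPolynomialX ι ι R) by
      simpa using Submodule.sub_mem _ hcb hc₀)
  simpa [Algebra.smul_def] using hX.apply_mul_shiftMul_apply hι p.1 p.2 q.1 q.2

variable (ι R) in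
/-- The comorphism of the parametrization `(u, v) ↦ tracelessPart (vecMulVec u v)`, where the
coordinates of `u` and `v` are indexed by the two summands of `ι ⊕ ι`. -/
def coneComorphism : MvPolynomial (ι × ι) R →ₐ[R] MvPolynomial (ι ⊕ ι) R :=
  MvPolynomial.aeval fun p => tracelessPart
    (Matrix.vecMulVec (fun i => .X (Sum.inl i)) fun j => .X (Sum.inr j)) p.1 p.2

theorem eval_coneComorphism (x : ι ⊕ ι → R) (F : MvPolynomial (ι × ι) R) :
    MvPolynomial.eval x (coneComorphism ι R F) = MvPolynomial.aeval (fun p => tracelessPart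
      (Matrix.vecMulVec (fun i => x (.inl i)) fun j => x (.inr j)) p.1 p.2) F := by
  have map_vecMulVec : (Matrix.vecMulVec (fun i => .X (Sum.inl i)) fun j => .X (Sum.inr j) :
      Matrix ι ι (MvPolynomial (ι ⊕ ι) R)).map (MvPolynomial.aeval x) =
        Matrix.vecMulVec (fun i => x (.inl i)) fun j => x (.inr j) := by
    ext i j
    simp [Matrix.vecMulVec_apply]
  rw [← MvPolynomial.coe_aeval_eq_eval, ← map_vecMulVec]
  exact algHom_aeval_tracelessPart (MvPolynomial.aeval x) _ F

theorem aeval_tracelessPart_eq_zero [Algebra R C] {Y : Matrix ι ι C}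
    (hY : ∀ i j k l, Y i j * Y k l = Y i l * Y k j) {F : MvPolynomial (ι × ι) R}
    (hF : coneComorphism ι R F = 0) :
    MvPolynomial.aeval (fun p => tracelessPart Y p.1 p.2) F = 0 := by
  rw [← map_mvPolynomialX_aeval (R := R) Y, ← algHom_aeval_tracelessPart]
  refine Segre.aeval_eq_zero (Y := fun p => Y p.1 p.2) hY ?_
  rw [coneComorphism, ← map_mvPolynomialX_aeval (R := R) (Matrix.vecMulVec _ _),
    ← algHom_aeval_tracelessPart] at hF
  exact hF

theorem ker_coneComorphism_le (hι : 4 ≤ card ι) :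
    RingHom.ker (coneComorphism ι R) ≤ shiftIdeal (Matrix.mvPolynomialX ι ι R) := by
  intro F hF
  set I := shiftIdeal (Matrix.mvPolynomialX ι ι R)
  let B := MvPolynomial (ι × ι) R ⧸ I
  have hker : RingHom.ker (algebraMap (MvPolynomial (ι × ι) R) B) = I := Ideal.mk_ker
  let X : Matrix ι ι B := (Matrix.mvPolynomialX ι ι R).map (algebraMap _ B)
  have hX : IsShiftedRankOne X := isShiftedRankOne_map_iff.mpr hker.ge
  obtain ⟨C, _, _, w, injective, w_sq, w_mul⟩ := exists_sqrt_extension (q := shiftSq X)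
    (fun b => eq_zero_of_mem_shiftGraph hι Ideal.Quotient.mk_surjective hker)
    (fun a b => iterate_mem_shiftGraph (by lia) hX)
  let _ : Algebra R C := .compHom C (algebraMap R B)
  let _ : Algebra ℚ C := .compHom C (algebraMap ℚ B)
  let f : B →ₐ[R] C := { algebraMap B C with commutes' := fun _ => rfl }
  have hwX (i j) : w * algebraMap B C (X i j) = algebraMap B C (shiftMul X i j) := by
    have h := apply_mem_shiftGraph (B := B) (X := X) i j
    rw [Algebra.algebraMap_self, RingHom.coe_id, Matrix.map_id] at h
    exact w_mul _ _ h
  have : Nonempty ι := Fintype.card_pos_iff.mp (by lia)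
  have trace_eq_zero : (X.map (algebraMap B C)).trace = 0 := by
    rw [← AddMonoidHom.map_trace, hX.trace_eq_zero, map_zero]
  have h := aeval_tracelessPart_eq_zero
    (hX.add_smul_one_minor_eq_zero (algebraMap B C) w_sq hwX) hF
  rw [tracelessPart_add_smul_one trace_eq_zero] at h
  rw [← Ideal.Quotient.eq_zero_iff_mem]
  have aeval_eq : algebraMap B C (Ideal.Quotient.mk I F) =
      MvPolynomial.aeval (fun p => X.map (algebraMap B C) p.1 p.2) F :=
    DFunLike.congr_fun (MvPolynomial.aeval_unique (f.comp (Ideal.Quotient.mkₐ R I))) F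
  exact injective ((aeval_eq.trans h).trans (map_zero _).symm)

end Generic

end Shift

section ConjugateMinors

open Fintype (card)

theorem card_mul_eq_of_rectangle_relation {ι B : Type*} [Fintype ι] [CommRing B]
    {f : ι → ι → B} (symm : ∀ i j, f i j = f j i) (diag : ∀ i, f i i = 0)
    (rect : ∀ {i j k l}, [i, j, k, l].Nodup → f i k - f i l - f j k + f j l = 0) {i k : ι}
    (hik : i ≠ k) :
    (card ι - 1) * (card ι - 2) * f i k =
      (card ι - 1) * (∑ l, f i l + ∑ l, f k l) - ∑ j, ∑ l, f j l := by
  classical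
  have rows (j) (hij : i ≠ j) (hjk : j ≠ k) :
      (card ι - 2) * (f i k - f j k) - ∑ l, f i l + ∑ l, f j l = 0 := by
    have h := Fintype.sum_eq_add (f := fun l => f i k - f i l - f j k + f j l) i j hij
      fun l hl => by
        by_cases hlk : l = k
        · rw [hlk]
          ring
        · exact rect (by simp; grind)
    simp only [Finset.sum_add_distrib, Finset.sum_sub_distrib, Finset.sum_const, Finset.card_univ,
      nsmul_eq_mul, diag, symm j i] at h
    linear_combination h
  have h := Fintype.sum_eq_single
    (f := fun j => (card ι - 2) * (f i k - f j k) - ∑ l, f i l + ∑ l, f j l) k fun j hjk => by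
      by_cases hij : i = j
      · rw [hij]
        ring
      · exact rows j hij hjk
  have column_sum : ∑ j, f j k = ∑ l, f k l := Finset.sum_congr rfl fun j _ => symm j k
  simp only [Finset.sum_add_distrib, Finset.sum_sub_distrib, ← Finset.mul_sum, Finset.sum_const,
    Finset.card_univ, nsmul_eq_mul, column_sum, diag] at h
  linear_combination h

variable {ι K B : Type*} [Fintype ι] [DecidableEq ι] [CommRing K] [CommRing B] [Algebra K B]

/-- The conjugate of `X` by an invertible matrix with constant entries. -/
def constConj (g : GL ι K) (X : Matrix ι ι B) : Matrix ι ι B :=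
  (g : Matrix ι ι K).map (algebraMap K B) * X * (↑g⁻¹ : Matrix ι ι K).map (algebraMap K B)

theorem constConj_one (X : Matrix ι ι B) : constConj (1 : GL ι K) X = X := by
  simp [constConj]

theorem constConj_mul (g h : GL ι K) (X : Matrix ι ι B) :
    constConj (g * h) X = constConj g (constConj h X) := by
  simp only [constConj, _root_.mul_inv_rev, Units.val_mul, Matrix.map_mul, Matrix.mul_assoc]

theorem constConj_permMatrix_apply (σ : Equiv.Perm ι) (X : Matrix ι ι B) (i j : ι) :
    constConj (permMatrixHom (R := K).toHomUnits σ) X i j = X (σ⁻¹ i) (σ⁻¹ j) := by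
  have map_permMatrix (τ : Equiv.Perm ι) :
      (τ.permMatrix K).map (algebraMap K B) = τ.permMatrix B := by
    ext i j
    simp [Equiv.Perm.permMatrix, PEquiv.toMatrix_apply, apply_ite (algebraMap K B)]
  rw [constConj, ← map_inv]
  simp only [MonoidHom.coe_toHomUnits, permMatrixHom_apply, inv_inv, map_permMatrix]
  rw [Equiv.Perm.permMatrix, Equiv.Perm.permMatrix, PEquiv.toMatrix_toPEquiv_mul,
    PEquiv.mul_toMatrix_toPEquiv]
  rfl

theorem map_constConj {C : Type*} [CommRing C] [Algebra K C] (f : B →ₐ[K] C) (g : GL ι K)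
    (X : Matrix ι ι B) : (constConj g X).map f = constConj g (X.map f) := by
  have map_const (M : Matrix ι ι K) :
      (M.map (algebraMap K B)).map f = M.map (algebraMap K C) := by
    ext i j
    exact f.commutes _
  rw [constConj, constConj, Matrix.map_mul, Matrix.map_mul, map_const, map_const]

variable (K) in
theorem constConj_transvection_apply {i j : ι} (hij : i ≠ j) :
    ∃ g : GL ι K, ∀ (X : Matrix ι ι B) (a b : ι), constConj g X a b =
      X a b + (if a = i then X j b else 0) - (if b = j then X a i else 0) -
        if a = i ∧ b = j then X j i else 0 := by
  refine ⟨⟨transvection i j 1, transvection i j (-1), ?_, ?_⟩, fun X a b => ?_⟩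
  · rw [transvection_mul_transvection_same i j hij, add_neg_cancel, transvection_zero]
  · rw [transvection_mul_transvection_same i j hij, neg_add_cancel, transvection_zero]
  · have map_transvection (c : K) : (transvection i j c).map (algebraMap K B) =
        transvection i j (algebraMap K B c) := by
      simp [transvection, Matrix.map_add]
    simp only [constConj, Units.inv_mk, map_transvection, map_neg, map_one]
    split_ifs <;> simp_all <;> ring

variable (K) in
/-- Every `2 × 2` minor of every conjugate of `X` whose rows and columns do not meet the diagonal
vanishes. -/
def ConjMinorsVanish (X : Matrix ι ι B) : Prop :=
  ∀ (g : GL ι K) {i k a b : ι}, [i, k, a, b].Nodup →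
    mixedMinor (constConj g X) (constConj g X) i k a b = 0

theorem exists_perm_map_eq {α : Type*} {l l' : List α} (hl : l.Nodup) (hl' : l'.Nodup)
    (hlength : l.length = l'.length) : ∃ σ : Equiv.Perm α, l.map σ = l' := by
  have := Equiv.Perm.isMultiplyPretransitive α l.length
  obtain ⟨σ, hσ⟩ := MulAction.exists_smul_eq (Equiv.Perm α)
    (⟨l.get, List.nodup_iff_injective_get.mp hl⟩ : Fin l.length ↪ α)
    ⟨l'.get ∘ Fin.cast hlength,
      (List.nodup_iff_injective_get.mp hl').comp (Fin.cast_injective hlength)⟩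
  refine ⟨σ, List.ext_get (by simpa using hlength) fun k hk _ => ?_⟩
  simpa using DFunLike.congr_fun hσ ⟨k, by simpa using hk⟩

theorem conjMinorsVanish_of_nodup {X : Matrix ι ι B} {i k a b : ι} (hnodup : [i, k, a, b].Nodup)
    (h : ∀ g : GL ι K, mixedMinor (constConj g X) (constConj g X) i k a b = 0) :
    ConjMinorsVanish K X := by
  intro g i' k' a' b' hnodup'
  obtain ⟨σ, hσ⟩ := exists_perm_map_eq hnodup hnodup' rfl
  simp only [List.map_cons, List.map_nil, List.cons.injEq, and_true] at hσ
  obtain ⟨rfl, rfl, rfl, rfl⟩ := hσ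
  have h := h ((permMatrixHom (R := K)).toHomUnits σ⁻¹ * g)
  simpa only [constConj_mul, mixedMinor, constConj_permMatrix_apply, inv_inv] using h

namespace ConjMinorsVanish

variable {X : Matrix ι ι B} (hX : ConjMinorsVanish K X)

include hX

theorem conj (h : GL ι K) : ConjMinorsVanish K (constConj h X) := fun g _ _ _ _ hnodup => by
  rw [← constConj_mul]
  exact hX (g * h) hnodup

theorem minor_eq_zero {i k a b : ι} (hnodup : [i, k, a, b].Nodup) :
    X i a * X k b - X k a * X i b = 0 := by
  have h := hX 1 hnodup
  rwa [constConj_one] at h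

theorem edgeMinor_eq {i j k l : ι} (hnodup : [i, j, k, l].Nodup) :
    X i j * X k k - X i k * X k j = X i j * X l l - X i l * X l j := by
  obtain ⟨g, hg⟩ := constConj_transvection_apply (B := B) K (i := k) (j := l) (by grind)
  have row_i (a) (ha : a ≠ l) : constConj g X i a = X i a := by grind
  have apply_i_l : constConj g X i l = X i l - X i k := by grind
  have apply_k_j : constConj g X k j = X k j + X l j := by grind
  have apply_k_l : constConj g X k l = X k l + X l l - X k k - X l k := by grind
  have h := (hX.conj g).minor_eq_zero (i := i) (k := k) (a := j) (b := l) (by grind)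
  rw [row_i j (by grind), apply_i_l, apply_k_j, apply_k_l] at h
  have h₁ := hX.minor_eq_zero (i := i) (k := k) (a := j) (b := l) (by grind)
  have h₂ := hX.minor_eq_zero (i := i) (k := l) (a := j) (b := k) (by grind)
  linear_combination h₁ - h₂ - h

theorem principalMinor_rectangle {i j k l : ι} (hnodup : [i, j, k, l].Nodup) :
    (X i i * X k k - X i k * X k i) - (X i i * X l l - X i l * X l i) -
      (X j j * X k k - X j k * X k j) + (X j j * X l l - X j l * X l j) = 0 := by
  obtain ⟨g, hg⟩ := constConj_transvection_apply (B := B) K (i := i) (j := j) (by grind)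
  have apply_i_j : constConj g X i j = X i j + X j j - X i i - X j i := by grind
  have row_i (a) (ha : a ≠ j) : constConj g X i a = X i a + X j a := by grind
  have col_j (a) (ha : a ≠ i) : constConj g X a j = X a j - X a i := by grind
  have apply_diag (a) (hai : a ≠ i) (haj : a ≠ j) : constConj g X a a = X a a := by grind
  have h := (hX.conj g).edgeMinor_eq hnodup
  rw [apply_i_j, row_i k (by grind), row_i l (by grind), col_j k (by grind), col_j l (by grind),
    apply_diag k (by grind) (by grind), apply_diag l (by grind) (by grind)] at h
  have h₁ := hX.edgeMinor_eq hnodup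
  have h₂ := hX.edgeMinor_eq (i := j) (j := i) (k := k) (l := l) (by grind)
  linear_combination h₁ - h₂ - h

end ConjMinorsVanish

namespace ConjMinorsVanish

variable [Algebra ℚ B] {X : Matrix ι ι B} (hX : ConjMinorsVanish K X) (htr : X.trace = 0)

include hX htr

theorem minor_add_shiftMul_eq_zero (hι : 4 ≤ card ι) {i j k : ι} (hij : i ≠ j) (hik : i ≠ k)
    (hjk : j ≠ k) : X i j * X k k - X i k * X k j + shiftMul X i j = 0 := by
  set N := X i j * X k k - X i k * X k j with hN
  have sum_minors : ∑ l, (X i j * X l l - X i l * X l j - N) = -2 * N := by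
    rw [Fintype.sum_eq_add i j hij fun l hl => ?_]
    · ring
    · by_cases hlk : l = k
      · rw [hlk, hN, sub_self]
      · rw [hN, sub_eq_zero]
        exact hX.edgeMinor_eq (by simp; grind)
  have sq_apply := congr_fun₂ (card_smul_shiftMul (X := X) (by lia)) i j
  simp only [Finset.sum_sub_distrib, ← Finset.mul_sum, Finset.sum_const, Finset.card_univ,
    nsmul_eq_mul, ← Matrix.mul_apply] at sum_minors
  rw [show ∑ l, X l l = 0 from htr] at sum_minors
  simp only [Matrix.smul_apply, Matrix.sub_apply, Matrix.one_apply_ne hij, smul_eq_mul,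
    mul_zero, sub_zero] at sq_apply
  refine (isUnit_natCast_sub (by lia : 2 < card ι)).mul_left_cancel ?_
  push_cast
  linear_combination sq_apply - sum_minors

theorem principalMinor_add_shiftMul_eq_zero (hι : 4 ≤ card ι) {i k : ι} (hik : i ≠ k) :
    X i i * X k k - X i k * X k i + shiftMul X i i + shiftMul X k k + shiftSq X = 0 := by
  have row_sum (i) : ∑ l, (X i i * X l l - X i l * X l i) = -(X * X) i i := by
    rw [Finset.sum_sub_distrib, ← Finset.mul_sum, ← Matrix.mul_apply,
      show ∑ l, X l l = 0 from htr, mul_zero, zero_sub]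
  have h := card_mul_eq_of_rectangle_relation (f := fun i k => X i i * X k k - X i k * X k i)
    (fun _ _ => by ring) (fun _ => by ring) hX.principalMinor_rectangle hik
  have total : ∑ j, (X * X) j j = card ι * (card ι - 1) * shiftSq X :=
    (card_mul_shiftSq (by lia)).symm
  have sq_apply (i) := congr_fun₂ (card_smul_shiftMul (X := X) (by lia)) i i
  simp only [Matrix.smul_apply, Matrix.sub_apply, Matrix.one_apply_eq, smul_eq_mul,
    mul_one] at sq_apply
  simp only [row_sum, Finset.sum_neg_distrib, total] at h
  refine ((isUnit_natCast_sub (by lia : 1 < card ι)).mul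
    (isUnit_natCast_sub (by lia : 2 < card ι))).mul_left_cancel ?_
  push_cast
  linear_combination h + (card ι - 1) * (sq_apply i + sq_apply k)

theorem shiftedMinor_eq_zero_of_left_eq (hι : 4 ≤ card ι) {i k b : ι} (hik : i ≠ k) (hib : i ≠ b) :
    shiftedMinor X i k i b = 0 := by
  have one_apply_k_i : (1 : Matrix ι ι B) k i = 0 := Matrix.one_apply_ne hik.symm
  have one_apply_i_b : (1 : Matrix ι ι B) i b = 0 := Matrix.one_apply_ne hib
  simp only [shiftedMinor, mixedMinor, Matrix.one_apply_eq, one_apply_k_i, one_apply_i_b]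
  obtain rfl | hkb := eq_or_ne k b
  · rw [Matrix.one_apply_eq]
    linear_combination hX.principalMinor_add_shiftMul_eq_zero htr hι hik
  · rw [Matrix.one_apply_ne hkb]
    linear_combination hX.minor_add_shiftMul_eq_zero htr hι hkb hik.symm hib.symm

theorem isShiftedRankOne (hι : 4 ≤ card ι) : IsShiftedRankOne X := by
  refine ⟨htr, fun i k a b => ?_⟩
  have swap_cols (i k a b) : shiftedMinor X i k b a = -shiftedMinor X i k a b := by
    rw [← shiftedMinor_transpose, shiftedMinor_swap_rows, shiftedMinor_transpose]
  have same_left {i k b} := hX.shiftedMinor_eq_zero_of_left_eq htr hι (i := i) (k := k) (b := b)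
  obtain rfl | hik := eq_or_ne i k
  · simp only [shiftedMinor, mixedMinor]
    ring
  obtain rfl | hab := eq_or_ne a b
  · simp only [shiftedMinor, mixedMinor]
    ring
  obtain rfl | hia := eq_or_ne i a
  · exact same_left hik hab
  obtain rfl | hib := eq_or_ne i b
  · rw [swap_cols, same_left hik hab.symm, neg_zero]
  obtain rfl | hka := eq_or_ne k a
  · rw [shiftedMinor_swap_rows, same_left hik.symm hab, neg_zero]
  obtain rfl | hkb := eq_or_ne k b
  · rw [swap_cols, shiftedMinor_swap_rows, same_left hik.symm hab.symm, neg_zero, neg_zero]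
  · simp only [shiftedMinor, mixedMinor, Matrix.one_apply_ne hia, Matrix.one_apply_ne hib,
      Matrix.one_apply_ne hka, Matrix.one_apply_ne hkb]
    linear_combination hX.minor_eq_zero (i := i) (k := k) (a := a) (b := b) (by simp; grind)

theorem aeval_eq_zero [Algebra ℚ K] (hι : 4 ≤ card ι) {F : MvPolynomial (ι × ι) K}
    (hF : coneComorphism ι K F = 0) : MvPolynomial.aeval (fun p => X p.1 p.2) F = 0 := by
  let f : MvPolynomial (ι × ι) K →+* B := MvPolynomial.aeval (R := K) fun p : ι × ι => X p.1 p.2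
  have map_eq : (Matrix.mvPolynomialX ι ι K).map f = X := map_mvPolynomialX_aeval X
  have h : IsShiftedRankOne ((Matrix.mvPolynomialX ι ι K).map f) :=
    map_eq ▸ hX.isShiftedRankOne htr hι
  exact isShiftedRankOne_map_iff.mp h (ker_coneComorphism_le hι hF)

end ConjMinorsVanish

theorem aeval_mem_of_mixedMinor_mem [Algebra ℚ K] {A : Type*} [CommRing A] [Algebra K A]
    {I : Ideal A} {X : Matrix ι ι A} {i k a b : ι} (hnodup : [i, k, a, b].Nodup)
    (hmem : ∀ g : GL ι K, mixedMinor (constConj g X) (constConj g X) i k a b ∈ I)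
    (htr : X.trace = 0) {F : MvPolynomial (ι × ι) K} (hF : coneComorphism ι K F = 0) :
    MvPolynomial.aeval (fun p => X p.1 p.2) F ∈ I := by
  let π : A →ₐ[K] A ⧸ I := Ideal.Quotient.mkₐ K I
  let _ : Algebra ℚ (A ⧸ I) := .compHom (A ⧸ I) (algebraMap ℚ K)
  have trace_eq_zero : (X.map π).trace = 0 := by
    rw [← AddMonoidHom.map_trace, htr, map_zero]
  have conjMinorsVanish : ConjMinorsVanish K (X.map π) := conjMinorsVanish_of_nodup hnodup
    fun g => by
      have h : π (mixedMinor (constConj g X) (constConj g X) i k a b) = 0 :=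
        Ideal.Quotient.eq_zero_iff_mem.mpr (hmem g)
      simpa only [mixedMinor, ← map_constConj, Matrix.map_apply, ← map_mul, ← map_sub] using h
  refine Ideal.Quotient.eq_zero_iff_mem.mp (Eq.trans ?_
    (conjMinorsVanish.aeval_eq_zero trace_eq_zero hnodup.length_le_card hF))
  exact DFunLike.congr_fun (MvPolynomial.comp_aeval _ π) F

end ConjugateMinors

section TracelessFunctions

open Fintype (card)

section PolynomialFunctions

variable (ι K : Type*) [Fintype ι] [Field K]

/-- The traceless matrices, as in `slS` but over any index type and any field. -/
def tracelessMatrices : Set (Matrix ι ι K) := {X | X.trace = 0}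

/-- The algebra of polynomial functions on the traceless matrices, as in `polyFns`. -/
def tracelessPolyFns : Subalgebra K (tracelessMatrices ι K → K) :=
  Algebra.adjoin K {p | ∃ i j : ι, p = fun X => X.1 i j}

/-- The coordinate functions of the traceless matrices, arranged into a matrix. -/
def coordinateMatrix : Matrix ι ι (tracelessPolyFns ι K) :=
  Matrix.of fun i j => ⟨fun X => X.1 i j, Algebra.subset_adjoin ⟨i, j, rfl⟩⟩

/-- The polynomial function on the traceless matrices given by a polynomial in the entries. -/
def toTracelessPolyFns : MvPolynomial (ι × ι) K →ₐ[K] tracelessPolyFns ι K :=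
  MvPolynomial.aeval fun p => coordinateMatrix ι K p.1 p.2

variable {ι K}

/-- Evaluation of polynomial functions at a traceless matrix. -/
def evalAt (X : tracelessMatrices ι K) : tracelessPolyFns ι K →ₐ[K] K :=
  (Pi.evalAlgHom K _ X).comp (tracelessPolyFns ι K).val

theorem map_evalAt_coordinateMatrix (X : tracelessMatrices ι K) :
    (coordinateMatrix ι K).map (evalAt X) = X.1 := rfl

theorem evalAt_toTracelessPolyFns (F : MvPolynomial (ι × ι) K) (X : tracelessMatrices ι K) :
    evalAt X (toTracelessPolyFns ι K F) = MvPolynomial.aeval (fun p => X.1 p.1 p.2) F := by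
  rw [toTracelessPolyFns, ← AlgHom.comp_apply, MvPolynomial.comp_aeval]
  rfl

theorem toTracelessPolyFns_surjective : Function.Surjective (toTracelessPolyFns ι K) := by
  rintro ⟨p, hp⟩
  have range_eq : {p : tracelessMatrices ι K → K | ∃ i j : ι, p = fun X => X.1 i j} =
      Set.range fun q : ι × ι => fun X => X.1 q.1 q.2 := by
    ext p
    simp only [Set.mem_ofPred_eq, Set.mem_range, Prod.exists, eq_comm]
  rw [tracelessPolyFns, range_eq, Algebra.adjoin_range_eq_range_aeval] at hp
  obtain ⟨F, rfl⟩ := hp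
  refine ⟨F, Subtype.ext ?_⟩
  exact DFunLike.congr_fun (MvPolynomial.comp_aeval _ (tracelessPolyFns ι K).val) F

theorem trace_coordinateMatrix : (coordinateMatrix ι K).trace = 0 := by
  refine Subtype.ext (funext fun X => ?_)
  change evalAt X (coordinateMatrix ι K).trace = 0
  rw [AddMonoidHom.map_trace, map_evalAt_coordinateMatrix]
  exact X.2

end PolynomialFunctions

variable {ι : Type*} (K : Type*) [Fintype ι] [DecidableEq ι] [Field K]

/-- The ideal of polynomial functions generated by the conjugates of the `2 × 2` minor in the
rows `i`, `k` and the columns `a`, `b`. -/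
def conjMinorIdeal (i k a b : ι) : Ideal (tracelessPolyFns ι K) :=
  Ideal.span {p | ∃ g : GL ι K, (p : tracelessMatrices ι K → K) = fun X =>
    mixedMinor ((g : Matrix ι ι K) * X.1 * (↑g⁻¹ : Matrix ι ι K))
      ((g : Matrix ι ι K) * X.1 * (↑g⁻¹ : Matrix ι ι K)) i k a b}

/-- The nonzero multiples of the conjugates of `diag(n - 1, -1, …, -1)`, where the entry `n - 1`
is in position `z`. -/
def rankOneCone (z : ι) : Set (tracelessMatrices ι K) :=
  {X | ∃ t : K, t ≠ 0 ∧ ∃ g : GL ι K, X.1 = t • ((g : Matrix ι ι K) *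
    Matrix.diagonal (fun i => if i = z then (card ι : K) - 1 else -1) * (↑g⁻¹ : Matrix ι ι K))}

variable {K}

theorem mixedMinor_constConj_mem_conjMinorIdeal (i k a b : ι) (g : GL ι K) :
    mixedMinor (constConj g (coordinateMatrix ι K)) (constConj g (coordinateMatrix ι K)) i k a b ∈
      conjMinorIdeal K i k a b := by
  refine Ideal.subset_span ⟨g, funext fun X => ?_⟩
  have constConj_apply (i j : ι) : evalAt X (constConj g (coordinateMatrix ι K) i j) =
      ((g : Matrix ι ι K) * X.1 * (↑g⁻¹ : Matrix ι ι K)) i j := by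
    rw [← map_evalAt_coordinateMatrix, ← Matrix.map_apply (f := evalAt X), map_constConj]
    rfl
  simp only [mixedMinor, ← constConj_apply, ← map_mul, ← map_sub]
  rfl

theorem exists_gl_mulVec_single_eq {z : ι} {u v : ι → K} (hz : v z ≠ 0) (hvu : v ⬝ᵥ u ≠ 0) :
    ∃ g : GL ι K, (g : Matrix ι ι K) *ᵥ Pi.single z 1 = u ∧
      v ᵥ* (g : Matrix ι ι K) = (v ⬝ᵥ u) • Pi.single z 1 := by
  set e : ι → K := Pi.single z 1 with he
  let M : Matrix ι ι K := 1 - Matrix.vecMulVec e ((v z)⁻¹ • v) + Matrix.vecMulVec u e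
  have v_dot_e : v ⬝ᵥ e = v z := dotProduct_single_one v z
  have mulVec_eq (w : ι → K) : M *ᵥ w = w - ((v z)⁻¹ * (v ⬝ᵥ w)) • e + w z • u := by
    simp only [M, Matrix.add_mulVec, Matrix.sub_mulVec, Matrix.one_mulVec, Matrix.vecMulVec_mulVec,
      op_smul_eq_smul, smul_dotProduct, smul_eq_mul, he, single_one_dotProduct]
  have vecMul_eq : v ᵥ* M = (v ⬝ᵥ u) • e := by
    simp only [M, Matrix.vecMul_add, Matrix.vecMul_sub, Matrix.vecMul_one, Matrix.vecMul_vecMulVec,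
      v_dot_e, smul_inv_smul₀ hz, sub_self, zero_add]
  have isUnit : IsUnit M := by
    rw [← Matrix.mulVec_injective_iff_isUnit]
    refine (injective_iff_map_eq_zero M.mulVecLin).mpr fun w hw => ?_
    change M *ᵥ w = 0 at hw
    have w_z : w z = 0 := by
      have h : v ⬝ᵥ M *ᵥ w = 0 := by rw [hw, dotProduct_zero]
      rw [Matrix.dotProduct_mulVec, vecMul_eq, smul_dotProduct, he, single_one_dotProduct] at h
      exact (mul_eq_zero.mp h).resolve_left hvu
    rw [mulVec_eq, w_z, zero_smul, add_zero, sub_eq_zero] at hw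
    have h := congr_fun hw z
    rw [w_z, Pi.smul_apply, he, Pi.single_eq_same, smul_eq_mul, mul_one] at h
    rw [hw, ← h, zero_smul]
  obtain ⟨g, hg⟩ := isUnit
  refine ⟨g, ?_, hg ▸ vecMul_eq⟩
  rw [hg, mulVec_eq, v_dot_e, inv_mul_cancel₀ hz, one_smul, he, Pi.single_eq_same, one_smul,
    sub_self, zero_add]

variable [CharZero K]

theorem toTracelessPolyFns_mem_conjMinorIdeal {i k a b : ι} (hnodup : [i, k, a, b].Nodup)
    {F : MvPolynomial (ι × ι) K} (hF : coneComorphism ι K F = 0) :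
    toTracelessPolyFns ι K F ∈ conjMinorIdeal K i k a b :=
  aeval_mem_of_mixedMinor_mem (K := K) hnodup
    (mixedMinor_constConj_mem_conjMinorIdeal i k a b)
    trace_coordinateMatrix hF

theorem smul_conj_diagonal_eq_tracelessPart (z : ι) (t : K) (g : GL ι K) :
    t • ((g : Matrix ι ι K) * Matrix.diagonal (fun i => if i = z then (card ι : K) - 1 else -1) *
        (↑g⁻¹ : Matrix ι ι K)) =
      tracelessPart (Matrix.vecMulVec ((t * card ι) • (g : Matrix ι ι K) *ᵥ Pi.single z 1)
        (Pi.single z 1 ᵥ* (↑g⁻¹ : Matrix ι ι K))) := by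
  rw [← tracelessPart_card_smul_single, ← tracelessPart_units_conj, ← tracelessPart_smul,
    Matrix.mul_smul, Matrix.smul_mul, smul_smul, Matrix.single_eq_single_vecMulVec_single,
    Matrix.mul_vecMulVec, Matrix.vecMulVec_mul, Matrix.smul_vecMulVec]

theorem tracelessPart_vecMulVec_mem_rankOneCone {z : ι} {u v : ι → K} (hz : v z ≠ 0)
    (hvu : v ⬝ᵥ u ≠ 0) {X : tracelessMatrices ι K}
    (hX : X.1 = tracelessPart (Matrix.vecMulVec u v)) : X ∈ rankOneCone K z := by
  obtain ⟨g, hgu, hvg⟩ := exists_gl_mulVec_single_eq hz hvu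
  have : Nonempty ι := ⟨z⟩
  have card_ne_zero : (card ι : K) ≠ 0 := mod_cast Fintype.card_ne_zero
  refine ⟨(v ⬝ᵥ u) * (card ι : K)⁻¹, mul_ne_zero hvu (inv_ne_zero card_ne_zero), g, ?_⟩
  have v_eq : v = (v ⬝ᵥ u) • Pi.single z 1 ᵥ* (↑g⁻¹ : Matrix ι ι K) := by
    rw [← Matrix.smul_vecMul, ← hvg, Matrix.vecMul_vecMul, ← Units.val_mul, mul_inv_cancel,
      Units.val_one, Matrix.vecMul_one]
  rw [hX, smul_conj_diagonal_eq_tracelessPart, hgu, inv_mul_cancel_right₀ card_ne_zero,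
    Matrix.smul_vecMulVec, ← Matrix.vecMulVec_smul, ← v_eq]

theorem vanishes_on_rankOneCone_of_mem_conjMinorIdeal {i k a b : ι} (hnodup : [i, k, a, b].Nodup)
    {p : tracelessPolyFns ι K} (hp : p ∈ conjMinorIdeal K i k a b) {z : ι}
    {X : tracelessMatrices ι K} (hX : X ∈ rankOneCone K z) : evalAt X p = 0 := by
  suffices conjMinorIdeal K i k a b ≤ RingHom.ker (evalAt X) from this hp
  obtain ⟨t, -, h, hX⟩ := hX
  refine Ideal.span_le.mpr ?_
  rintro p ⟨g, hp⟩
  rw [smul_conj_diagonal_eq_tracelessPart] at hX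
  refine (congr_fun hp X).trans ?_
  rw [hX, ← tracelessPart_units_conj, Matrix.mul_vecMulVec, Matrix.vecMulVec_mul]
  simp only [mixedMinor, Matrix.vecMulVec_apply, tracelessPart_apply_ne _ (by grind : i ≠ a),
    tracelessPart_apply_ne _ (by grind : i ≠ b), tracelessPart_apply_ne _ (by grind : k ≠ a),
    tracelessPart_apply_ne _ (by grind : k ≠ b)]
  ring

theorem coneComorphism_eq_zero_of_vanishes_on_rankOneCone {z : ι} {F : MvPolynomial (ι × ι) K}
    (hF : ∀ X ∈ rankOneCone K z, evalAt X (toTracelessPolyFns ι K F) = 0) :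
    coneComorphism ι K F = 0 := by
  have : Nonempty ι := ⟨z⟩
  let pairing : MvPolynomial (ι ⊕ ι) K := ∑ i, .X (.inr i) * .X (.inl i)
  have eval_pairing (x : ι ⊕ ι → K) : MvPolynomial.eval x pairing =
      (fun i => x (.inr i)) ⬝ᵥ fun i => x (.inl i) := by
    simp [pairing, dotProduct]
  have pairing_ne_zero : pairing ≠ 0 := by
    intro h
    have card_eq_zero : (0 : K) = Fintype.card ι := by
      simpa [h, dotProduct] using eval_pairing 1
    exact Fintype.card_ne_zero (Nat.cast_eq_zero.mp card_eq_zero.symm)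
  suffices coneComorphism ι K F * (.X (.inr z) * pairing) = 0 from
    (mul_eq_zero.mp this).resolve_right (mul_ne_zero (MvPolynomial.X_ne_zero _) pairing_ne_zero)
  refine MvPolynomial.funext fun x => ?_
  rw [map_mul, map_mul, map_zero, eval_pairing, MvPolynomial.eval_X]
  obtain hz | hz := eq_or_ne (x (.inr z)) 0
  · rw [hz, zero_mul, mul_zero]
  obtain hvu | hvu := eq_or_ne ((fun i => x (.inr i)) ⬝ᵥ fun i => x (.inl i)) 0
  · rw [hvu, mul_zero, mul_zero]
  let X : tracelessMatrices ι K :=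
    ⟨tracelessPart (Matrix.vecMulVec (fun i => x (.inl i)) fun i => x (.inr i)),
      trace_tracelessPart _⟩
  have h := hF X (tracelessPart_vecMulVec_mem_rankOneCone
    (u := fun i => x (.inl i)) (v := fun i => x (.inr i)) hz hvu rfl)
  rw [evalAt_toTracelessPolyFns] at h
  rw [eval_coneComorphism, h, zero_mul]

theorem comap_conjMinorIdeal {i k a b : ι} (hnodup : [i, k, a, b].Nodup) :
    (conjMinorIdeal K i k a b).comap (toTracelessPolyFns ι K) =
      RingHom.ker (coneComorphism ι K) := by
  ext F
  exact ⟨fun hF => coneComorphism_eq_zero_of_vanishes_on_rankOneCone (z := i) fun _ hX =>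
    vanishes_on_rankOneCone_of_mem_conjMinorIdeal hnodup hF hX,
    toTracelessPolyFns_mem_conjMinorIdeal hnodup⟩

theorem conjMinorIdeal_isPrime {i k a b : ι} (hnodup : [i, k, a, b].Nodup) :
    (conjMinorIdeal K i k a b).IsPrime := by
  rw [← Ideal.map_comap_of_surjective _ toTracelessPolyFns_surjective (conjMinorIdeal K i k a b)]
  have := RingHom.ker_isPrime (coneComorphism ι K)
  rw [comap_conjMinorIdeal hnodup]
  refine Ideal.map_isPrime_of_surjective toTracelessPolyFns_surjective ?_
  rw [← comap_conjMinorIdeal hnodup]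
  exact Ideal.comap_mono bot_le

end TracelessFunctions

theorem eq_zero_on_slZclosure_iff {n : ℕ} {p : ↥(slS n) → ℂ} (hp : p ∈ polyFns n)
    {C : Set ↥(slS n)} : (∀ X ∈ slZclosure n C, p X = 0) ↔ ∀ X ∈ C, p X = 0 := by
  refine ⟨fun h X hX => h X (Set.mem_sInter.mpr fun _ hD => hD.2 hX), fun h X hX => ?_⟩
  exact Set.mem_sInter.mp hX {Y | p Y = 0}
    ⟨⟨{p}, Set.singleton_subset_iff.mpr hp, by simp⟩, h⟩

theorem stmt_7_general {ι K : Type*} [Fintype ι] [DecidableEq ι] [Field K] [CharZero K]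
    {i k a b : ι} (hnodup : [i, k, a, b].Nodup) (z : ι) :
    (conjMinorIdeal K i k a b).IsPrime ∧ ∀ p : tracelessPolyFns ι K,
      p ∈ conjMinorIdeal K i k a b ↔
        ∀ X ∈ rankOneCone K z, (p : tracelessMatrices ι K → K) X = 0 := by
  refine ⟨conjMinorIdeal_isPrime hnodup, fun p => ⟨fun hp X hX =>
    vanishes_on_rankOneCone_of_mem_conjMinorIdeal hnodup hp hX, fun h => ?_⟩⟩
  obtain ⟨F, rfl⟩ := toTracelessPolyFns_surjective p
  exact toTracelessPolyFns_mem_conjMinorIdeal hnodup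
    (coneComorphism_eq_zero_of_vanishes_on_rankOneCone h)

theorem stmt_7 (n : ℕ) (hn : 4 ≤ n)
    -- `μ(X) = X_{n,1}·X_{n−1,2} − X_{n−1,1}·X_{n,2}` (1-based indices)
    (mu : Mat n → ℂ)
    (hmu : mu = fun X =>
      X ⟨n - 1, by omega⟩ ⟨0, by omega⟩ * X ⟨n - 2, by omega⟩ ⟨1, by omega⟩ -
      X ⟨n - 2, by omega⟩ ⟨0, by omega⟩ * X ⟨n - 1, by omega⟩ ⟨1, by omega⟩)
    -- `I` is the ideal of `ℂ[sl_n]` generated by the functions `X ↦ μ(g·X·g⁻¹)`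
    (I : Ideal (polyFns n))
    (hI : I = Ideal.span {p : polyFns n | ∃ g : GLn n,
      (p : ↥(slS n) → ℂ) = fun X => mu ((↑g : Mat n) * X.1 * (↑g⁻¹ : Mat n))})
    -- `D = diag(n−1, −1, −1, …, −1)`
    (D : Mat n)
    (hD : D = Matrix.diagonal fun i : Fin n => if (i : ℕ) = 0 then ((n : ℂ) - 1) else -1) :
    I.IsPrime ∧
    ∀ p : polyFns n, p ∈ I ↔
      ∀ X ∈ slZclosure n {X : ↥(slS n) | ∃ t : ℂ, t ≠ 0 ∧ ∃ g : GLn n,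
        X.1 = t • ((↑g : Mat n) * D * (↑g⁻¹ : Mat n))},
        (p : ↥(slS n) → ℂ) X = 0 := by
  subst hmu hI hD
  have hnodup : [(⟨n - 1, by omega⟩ : Fin n), ⟨n - 2, by omega⟩, ⟨0, by omega⟩,
      ⟨1, by omega⟩].Nodup := by
    simp [Fin.ext_iff]
    omega
  obtain ⟨isPrime, mem_iff⟩ := stmt_7_general (K := ℂ) hnodup ⟨0, by omega⟩
  have cone_eq : {X : ↥(slS n) | ∃ t : ℂ, t ≠ 0 ∧ ∃ g : GLn n,
      X.1 = t • ((↑g : Mat n) * (Matrix.diagonal fun i : Fin n =>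
        if (i : ℕ) = 0 then ((n : ℂ) - 1) else -1) * (↑g⁻¹ : Mat n))} =
      rankOneCone ℂ ⟨0, by omega⟩ := by
    simp only [rankOneCone, Fintype.card_fin, Fin.ext_iff]
    rfl
  rw [cone_eq]
  exact ⟨isPrime, fun p => (mem_iff p).trans (eq_zero_on_slZclosure_iff p.2).symm⟩
end
end

section
/- Let m ≥ 2 and let D ∈ sl_{2m}(ℂ) be the diagonal matrix with m entries equal to 1 followed by m entries equal to −1. Then the following four subsets of sl_{2m}(ℂ) coincide: (1) {X : the (2m,1) entry of g·X²·g⁻¹ vanishes for all g ∈ GL_{2m}(ℂ)}; (2) {X : X² is a scalar multiple of the identity matrix}; (3) the Zariski closure of the cone {t·g·D·g⁻¹ : t ∈ ℂ∖{0}, g ∈ GL_{2m}(ℂ)}; (4) {t·g·D·g⁻¹ : t ∈ ℂ∖{0}, g ∈ GL_{2m}(ℂ)} ∪ {X : X² = 0}. -/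
open Matrix

noncomputable section

/-!
If `X² = t² • 1` with `t ≠ 0`, then `t⁻¹ • X` is an involution `u`; the rank of the idempotent
`(1 + u) / 2` is determined by `tr u`, so all traceless involutions are conjugate and `X` lies in
the cone over the class of `D`. If `X² = 0`, pick a half-dimensional `A` with `im X ≤ A ≤ ker X`
and a projection `p` onto `A`: then `Y = 2p - 1` is a traceless involution anticommuting with `X`,
so `(X + sY)² = s² • 1`, and `X` is the value at `s = 0` of a line lying in the cone for `s ≠ 0`.
Conversely, having trace zero and scalar square is a Zariski closed condition. Finally, if one
off-diagonal entry vanishes on all conjugates of a matrix, permutations show that every conjugate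
is diagonal, and conjugating by transvections shows that the diagonal is constant.
-/

section Involutions

variable {K V : Type*} [Field K] [AddCommGroup V] [Module K V]

theorem isIdempotentElem_inv_two_smul_one_add {A : Type*} [Ring A] [Algebra K A] [NeZero (2 : K)]
    {u : A} (hu : u * u = 1) : IsIdempotentElem ((2⁻¹ : K) • (1 + u)) := by
  have hsq : (1 + u) * (1 + u) = (2 : K) • (1 + u) := by
    rw [two_smul, add_mul, mul_add, mul_add, hu, one_mul, one_mul, mul_one]
    abel
  rw [IsIdempotentElem, smul_mul_smul_comm, hsq, smul_smul, inv_mul_cancel_right₀ two_ne_zero]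

theorem two_mul_sub_one_mul_self {A : Type*} [Ring A] {p : A} (hp : IsIdempotentElem p) :
    (2 * p - 1) * (2 * p - 1) = 1 := by
  simp only [two_mul, mul_add, add_mul, mul_sub, sub_mul, hp.eq, one_mul, mul_one]
  abel

theorem isConj_of_isIdempotentElem [FiniteDimensional K V] {p q : Module.End K V}
    (hp : IsIdempotentElem p) (hq : IsIdempotentElem q)
    (hpq : Module.finrank K p.range = Module.finrank K q.range) : IsConj p q := by
  have hker : Module.finrank K p.ker = Module.finrank K q.ker := by
    have hp' := p.finrank_range_add_finrank_ker
    have hq' := q.finrank_range_add_finrank_ker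
    lia
  have hpc := LinearMap.IsIdempotentElem.isCompl hp
  have hqc := LinearMap.IsIdempotentElem.isCompl hq
  let e := (p.range.prodEquivOfIsCompl _ hpc).symm ≪≫ₗ
    (LinearEquiv.ofFinrankEq _ _ hpq).prodCongr (LinearEquiv.ofFinrankEq _ _ hker) ≪≫ₗ
      q.range.prodEquivOfIsCompl _ hqc
  refine ⟨LinearMap.GeneralLinearGroup.ofLinearEquiv e, LinearMap.ext fun v => ?_⟩
  obtain ⟨⟨x, y⟩, rfl⟩ := (p.range.prodEquivOfIsCompl _ hpc).surjective v
  have hpx : p x = x := (LinearMap.IsIdempotentElem.mem_range_iff hp).mp x.2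
  have hq_range (z : q.range) : q z = z := (LinearMap.IsIdempotentElem.mem_range_iff hq).mp z.2
  change e (p _) = q (e _)
  simp [e, hpx, hq_range]

theorem finrank_range_eq_of_trace_eq [FiniteDimensional K V] [CharZero K] {p q : Module.End K V}
    (hp : IsIdempotentElem p) (hq : IsIdempotentElem q)
    (hpq : LinearMap.trace K V p = LinearMap.trace K V q) :
    Module.finrank K p.range = Module.finrank K q.range := by
  rw [(LinearMap.IsIdempotentElem.isProj_range p hp).trace,
    (LinearMap.IsIdempotentElem.isProj_range q hq).trace] at hpq
  exact_mod_cast hpq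

theorem isConj_of_mul_self_eq_one [FiniteDimensional K V] [CharZero K] {u v : Module.End K V}
    (hu : u * u = 1) (hv : v * v = 1) (huv : LinearMap.trace K V u = LinearMap.trace K V v) :
    IsConj u v := by
  have hup := isIdempotentElem_inv_two_smul_one_add (K := K) hu
  have hvp := isIdempotentElem_inv_two_smul_one_add (K := K) hv
  obtain ⟨c, hc⟩ := isConj_of_isIdempotentElem hup hvp
    (finrank_range_eq_of_trace_eq hup hvp (by simp [huv]))
  have recover (w : Module.End K V) :
      (2⁻¹ : K) • (1 + w) + (2⁻¹ : K) • (1 + w) - 1 = w := by module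
  rw [← recover u, ← recover v]
  exact ⟨c, (hc.add_right hc).sub_right (SemiconjBy.one_right _)⟩

theorem even_finrank_of_mul_self_eq_one [FiniteDimensional K V] [CharZero K] {u : Module.End K V}
    (hu : u * u = 1) (htr : LinearMap.trace K V u = 0) : Even (Module.finrank K V) := by
  have hup := isIdempotentElem_inv_two_smul_one_add (K := K) hu
  set p := (2⁻¹ : K) • (1 + u) with hp
  have htrace := (LinearMap.IsIdempotentElem.isProj_range p hup).trace
  rw [hp, map_smul, map_add, htr, add_zero, LinearMap.trace_one, smul_eq_mul,
    inv_mul_eq_iff_eq_mul₀ two_ne_zero, ← hp] at htrace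
  have hdim : Module.finrank K V = 2 * Module.finrank K p.range := by exact_mod_cast htrace
  exact even_iff_two_dvd.mpr ⟨_, hdim⟩

end Involutions

section SquareZero

variable {K V : Type*} [Field K] [AddCommGroup V] [Module K V] [FiniteDimensional K V]

theorem exists_finrank_eq_of_le {A B : Submodule K V} (hAB : A ≤ B) {r : ℕ}
    (hAr : Module.finrank K A ≤ r) (hrB : r ≤ Module.finrank K B) :
    ∃ C : Submodule K V, A ≤ C ∧ C ≤ B ∧ Module.finrank K C = r := by
  induction r, hAr using Nat.le_induction with
  | base => exact ⟨A, le_rfl, hAB, rfl⟩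
  | succ r _ ih =>
    obtain ⟨C, hAC, hCB, hC⟩ := ih (by lia)
    have hBC : ¬ B ≤ C := fun h => by
      have := Submodule.finrank_mono h
      lia
    obtain ⟨x, hxB, hxC⟩ := SetLike.not_le_iff_exists.mp hBC
    refine ⟨C ⊔ Submodule.span K {x}, hAC.trans le_sup_left, sup_le hCB (by simpa using hxB), ?_⟩
    rw [Submodule.finrank_sup_span_singleton hxC, hC]

theorem exists_isProj_mul_eq_self_mul_eq_zero {f : Module.End K V} (hf : f * f = 0) {r : ℕ}
    (hr : Module.finrank K V = 2 * r) :
    ∃ (A : Submodule K V) (p : Module.End K V),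
      Module.finrank K A = r ∧ LinearMap.IsProj A p ∧ p * f = f ∧ f * p = 0 := by
  have hle : f.range ≤ f.ker := LinearMap.range_le_ker_iff.mpr hf
  have hrank := f.finrank_range_add_finrank_ker
  have hmono := Submodule.finrank_mono hle
  obtain ⟨A, hrangeA, hAker, hA⟩ := exists_finrank_eq_of_le hle
    (show _ ≤ r by lia) (show r ≤ _ by lia)
  obtain ⟨B, hAB⟩ := A.exists_isCompl
  have hproj : LinearMap.IsProj A (A.projection B hAB) :=
    ⟨A.projection_apply_mem hAB, fun _ => A.projection_apply_of_mem_left hAB⟩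
  exact ⟨A, _, hA, hproj,
    LinearMap.ext fun v => hproj.map_id _ (hrangeA (LinearMap.mem_range_self f v)),
    LinearMap.ext fun v => hAker (hproj.map_mem v)⟩

theorem exists_mul_self_eq_one_anticommute {f : Module.End K V} (hf : f * f = 0)
    (heven : Even (Module.finrank K V)) :
    ∃ y : Module.End K V, y * y = 1 ∧ LinearMap.trace K V y = 0 ∧ f * y + y * f = 0 := by
  obtain ⟨r, hr⟩ := heven.exists_two_nsmul
  rw [smul_eq_mul] at hr
  obtain ⟨A, p, hA, hp, hpf, hfp⟩ := exists_isProj_mul_eq_self_mul_eq_zero hf hr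
  refine ⟨2 * p - 1, two_mul_sub_one_mul_self hp.isIdempotentElem, ?_, ?_⟩
  · rw [two_mul, map_sub, map_add, hp.trace, LinearMap.trace_one, hA, hr]
    push_cast
    ring
  · rw [two_mul, mul_sub, mul_add, hfp, sub_mul, add_mul, hpf]
    simp

end SquareZero

section Matrices

variable {K n : Type*} [Field K] [Fintype n] [DecidableEq n]

theorem isConj_of_mul_self_eq_one_of_trace_eq [CharZero K] {P Q : Matrix n n K}
    (hP : P * P = 1) (hQ : Q * Q = 1) (hPQ : P.trace = Q.trace) : IsConj P Q := by
  have h := isConj_of_mul_self_eq_one (u := toLinAlgEquiv' P) (v := toLinAlgEquiv' Q)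
    (by rw [← map_mul, hP, map_one]) (by rw [← map_mul, hQ, map_one])
    ((trace_toLin'_eq P).trans (hPQ.trans (trace_toLin'_eq Q).symm))
  have hsymm := MonoidHom.map_isConj
    (toLinAlgEquiv' (R := K) (n := n)).symm.toMulEquiv.toMonoidHom h
  simpa using hsymm

theorem even_card_of_mul_self_eq_one_of_trace_eq_zero [CharZero K] {D : Matrix n n K}
    (hD : D * D = 1) (htr : D.trace = 0) : Even (Fintype.card n) := by
  rw [← Module.finrank_fintype_fun_eq_card K]
  exact even_finrank_of_mul_self_eq_one (u := toLinAlgEquiv' D) (by rw [← map_mul, hD, map_one])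
    ((trace_toLin'_eq D).trans htr)

theorem exists_matrix_mul_self_eq_one_anticommute {X : Matrix n n K} (hX : X * X = 0)
    (heven : Even (Fintype.card n)) :
    ∃ Y : Matrix n n K, Y * Y = 1 ∧ Y.trace = 0 ∧ X * Y + Y * X = 0 := by
  rw [← Module.finrank_fintype_fun_eq_card K] at heven
  obtain ⟨y, hy, hytr, hanti⟩ := exists_mul_self_eq_one_anticommute (f := toLinAlgEquiv' X)
    (by rw [← map_mul, hX, map_zero]) heven
  obtain ⟨Y, rfl⟩ := toLinAlgEquiv'.surjective y
  simp only [← map_mul, ← map_add] at hy hanti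
  exact ⟨Y, toLinAlgEquiv'.injective (hy.trans (map_one _).symm),
    (trace_toLin'_eq Y).symm.trans hytr,
    (map_eq_zero_iff _ toLinAlgEquiv'.injective).mp hanti⟩

end Matrices

section Conjugation

variable {R n : Type*} [CommRing R] [Fintype n] [DecidableEq n] {i j : n} {Y : Matrix n n R}

theorem permMatrix_conj_apply (σ : Equiv.Perm n) (Y : Matrix n n R) (i j : n) :
    (σ.permMatrix R * Y * σ⁻¹.permMatrix R) i j = Y (σ i) (σ j) := by
  rw [Equiv.Perm.permMatrix, Equiv.Perm.permMatrix, PEquiv.toMatrix_toPEquiv_mul,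
    PEquiv.mul_toMatrix_toPEquiv]
  rfl

theorem apply_eq_zero_of_forall_conj_apply_eq_zero (hij : i ≠ j)
    (hY : ∀ g : GL n R, ((g : Matrix n n R) * Y * (↑g⁻¹ : Matrix n n R)) i j = 0)
    {k l : n} (hkl : k ≠ l) : Y k l = 0 := by
  obtain ⟨σ, rfl, rfl⟩ := MulAction.is_two_pretransitive_iff.mp
    (Equiv.Perm.isMultiplyPretransitive n 2) hij hkl
  have := hY ((permMatrixHom (R := R)).toHomUnits σ⁻¹)
  rw [← map_inv, MonoidHom.coe_toHomUnits, MonoidHom.coe_toHomUnits] at this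
  simpa using (permMatrix_conj_apply σ Y i j).symm.trans this

theorem apply_self_eq_of_forall_conj_apply_eq_zero (hij : i ≠ j)
    (hY : ∀ g : GL n R, ((g : Matrix n n R) * Y * (↑g⁻¹ : Matrix n n R)) i j = 0)
    (k l : n) : Y k k = Y l l := by
  obtain rfl | hkl := eq_or_ne k l
  · rfl
  let τ : TransvectionStruct n R := ⟨k, l, hkl, 1⟩
  let T : GL n R := ⟨τ.toMatrix, τ.inv.toMatrix, τ.mul_inv, τ.inv_mul⟩
  have hT : (transvection k l 1 * Y * transvection k l (-1) : Matrix n n R) k l = 0 :=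
    apply_eq_zero_of_forall_conj_apply_eq_zero hij
      (Y := (T : Matrix n n R) * Y * (↑T⁻¹ : Matrix n n R))
      (fun g => by simpa [mul_assoc] using hY (g * T)) hkl
  rw [mul_transvection_apply_same, transvection_mul_apply_same, transvection_mul_apply_same,
    apply_eq_zero_of_forall_conj_apply_eq_zero hij hY hkl,
    apply_eq_zero_of_forall_conj_apply_eq_zero hij hY hkl.symm] at hT
  linear_combination -hT

omit [Fintype n] in
theorem exists_eq_smul_one_iff_eq_apply_smul_one (k : n) :
    (∃ c : R, Y = c • 1) ↔ Y = Y k k • 1 := by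
  refine ⟨?_, fun h => ⟨_, h⟩⟩
  rintro ⟨c, rfl⟩
  simp

theorem forall_conj_apply_eq_zero_iff (hij : i ≠ j) :
    (∀ g : GL n R, ((g : Matrix n n R) * Y * (↑g⁻¹ : Matrix n n R)) i j = 0) ↔
      ∃ c : R, Y = c • 1 := by
  refine ⟨fun hY => ⟨Y i i, ?_⟩, ?_⟩
  · ext k l
    obtain rfl | hkl := eq_or_ne k l
    · simpa using apply_self_eq_of_forall_conj_apply_eq_zero hij hY k i
    · simpa [hkl] using apply_eq_zero_of_forall_conj_apply_eq_zero hij hY hkl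
  · rintro ⟨c, rfl⟩ g
    simp [hij]

end Conjugation

section ZariskiClosure

variable {K n : Type*} [Field K]

/-- The Zariski closure of a set of matrices: the common zeros of all polynomials in the entries
that vanish on `S`. The index pairs `n × n` are the variables. -/
def zariskiClosure (S : Set (Matrix n n K)) : Set (Matrix n n K) :=
  {X | (fun q : n × n => X q.1 q.2) ∈ MvPolynomial.zeroLocus K
    (MvPolynomial.vanishingIdeal K ((fun (Y : Matrix n n K) (q : n × n) => Y q.1 q.2) '' S))}

theorem mem_zariskiClosure {S : Set (Matrix n n K)} {X : Matrix n n K} :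
    X ∈ zariskiClosure S ↔ ∀ p : MvPolynomial (n × n) K,
      (∀ Y ∈ S, p.eval (fun q => Y q.1 q.2) = 0) → p.eval (fun q => X q.1 q.2) = 0 := by
  simp [zariskiClosure, MvPolynomial.aeval_eq_eval]

theorem subset_zariskiClosure (S : Set (Matrix n n K)) : S ⊆ zariskiClosure S :=
  fun _ hX => mem_zariskiClosure.mpr fun _ hp => hp _ hX

theorem zclosure_eq_zariskiClosure {N : ℕ} (S : Set (Mat N)) : zclosure S = zariskiClosure S := by
  ext X
  rw [mem_zariskiClosure]
  constructor
  · intro hX p hp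
    exact Set.mem_sInter.mp hX {Z | p.eval (fun q => Z q.1 q.2) = 0} ⟨⟨{p}, by simp⟩, hp⟩
  · rintro hX _ ⟨⟨T, rfl⟩, hS⟩ p hp
    exact hX p fun Y hY => hS hY p hp

theorem mem_zariskiClosure_of_line [Infinite K] {S : Set (Matrix n n K)} {X Y : Matrix n n K}
    (h : ∀ s : K, s ≠ 0 → X + s • Y ∈ S) : X ∈ zariskiClosure S := by
  refine mem_zariskiClosure.mpr fun p hp => ?_
  let P : Polynomial K :=
    p.aeval fun q => Polynomial.C (X q.1 q.2) + Polynomial.C (Y q.1 q.2) * Polynomial.X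
  have hP (s : K) : P.eval s = p.eval fun q => (X + s • Y) q.1 q.2 := by
    rw [← Polynomial.coe_evalRingHom, MvPolynomial.map_aeval, MvPolynomial.eval]
    congr 1
    ext
    · simp
    · simp [mul_comm s]
  have hzero : P = 0 := P.eq_zero_of_infinite_isRoot <|
    (Set.finite_singleton (0 : K)).infinite_compl.mono fun s hs => (hP s).trans (hp _ (h s hs))
  simpa [hzero] using (hP 0).symm

end ZariskiClosure

section Cone

variable {K n : Type*} [Field K] [Fintype n] [DecidableEq n] {D : Matrix n n K}

/-- The cone of nonzero multiples of conjugates of `D`. For `D = diag(1, …, 1, -1, …, -1)` this is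
the rank-one Dixmier sheet without its nilpotent orbit. -/
def conjCone (D : Matrix n n K) : Set (Matrix n n K) :=
  {X | ∃ t : K, t ≠ 0 ∧ ∃ g : GL n K, X = t • ((g : Matrix n n K) * D * (↑g⁻¹ : Matrix n n K))}

variable (K n) in
/-- The traceless matrices whose square is scalar: in characteristic zero, the zero locus of
the entries of `X² - (tr X² / |n|) • 1` on the traceless matrices. -/
def tracelessScalarSquare : Set (Matrix n n K) :=
  {X | X.trace = 0 ∧ ∃ c : K, X * X = c • (1 : Matrix n n K)}

theorem conjCone_subset_tracelessScalarSquare (hD : D * D = 1) (htr : D.trace = 0) :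
    conjCone D ⊆ tracelessScalarSquare K n := by
  rintro _ ⟨t, -, g, rfl⟩
  refine ⟨by rw [trace_smul, trace_units_conj, htr, smul_zero], t * t, ?_⟩
  have hconj : (g : Matrix n n K) * D * (↑g⁻¹ : Matrix n n K) *
      ((g : Matrix n n K) * D * (↑g⁻¹ : Matrix n n K)) = 1 := by
    rw [mul_assoc, mul_assoc, mul_assoc, Units.inv_mul_cancel_left, ← mul_assoc D, hD, one_mul,
      Units.mul_inv]
  rw [smul_mul_smul_comm, hconj]

theorem mem_conjCone_of_mul_self_eq_smul_one [CharZero K] (hD : D * D = 1) (htr : D.trace = 0)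
    {X : Matrix n n K} (hX : X.trace = 0) {t : K} (ht : t ≠ 0) (hXX : X * X = (t * t) • 1) :
    X ∈ conjCone D := by
  have hP : (t⁻¹ • X) * (t⁻¹ • X) = 1 := by
    rw [smul_mul_smul_comm, hXX, smul_smul, mul_mul_mul_comm, inv_mul_cancel₀ ht, one_mul, one_smul]
  obtain ⟨g, hg⟩ := isConj_of_mul_self_eq_one_of_trace_eq hD hP
    (by rw [trace_smul, hX, htr, smul_zero])
  refine ⟨t, ht, g, ?_⟩
  rw [hg.eq, Units.mul_inv_cancel_right, smul_inv_smul₀ ht]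

theorem zariskiClosure_subset_tracelessScalarSquare [Nonempty n] {S : Set (Matrix n n K)}
    (hS : S ⊆ tracelessScalarSquare K n) : zariskiClosure S ⊆ tracelessScalarSquare K n := by
  intro X hX
  rw [mem_zariskiClosure] at hX
  obtain ⟨k⟩ := ‹Nonempty n›
  -- `Z²` is scalar iff `Z² = (Z²)ₖₖ • 1`, a condition polynomial in the entries of `Z`.
  let Ξ := mvPolynomialX n n K
  have hΞ (Z : Matrix n n K) : (MvPolynomial.eval fun q => Z q.1 q.2).mapMatrix Ξ = Z :=
    mvPolynomialX_mapMatrix_eval Z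
  have eval_trace (Z : Matrix n n K) : Ξ.trace.eval (fun q => Z q.1 q.2) = Z.trace :=
    (AddMonoidHom.map_trace _ Ξ).trans (congrArg trace (hΞ Z))
  have eval_sq (Z : Matrix n n K) (a b : n) :
      ((Ξ * Ξ) a b).eval (fun q => Z q.1 q.2) = (Z * Z) a b := by
    have hmul := map_mul (MvPolynomial.eval fun q => Z q.1 q.2).mapMatrix Ξ Ξ
    rw [hΞ] at hmul
    exact congrFun₂ hmul a b
  refine ⟨(eval_trace X).symm.trans (hX Ξ.trace fun Z hZ => (eval_trace Z).trans (hS hZ).1),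
    (exists_eq_smul_one_iff_eq_apply_smul_one k).mpr (Matrix.ext fun a b => ?_)⟩
  have := hX ((Ξ * Ξ) a b - (Ξ * Ξ) k k * MvPolynomial.C ((1 : Matrix n n K) a b)) fun Z hZ => by
    rw [map_sub, map_mul, MvPolynomial.eval_C, eval_sq, eval_sq, sub_eq_zero]
    exact congrFun₂ ((exists_eq_smul_one_iff_eq_apply_smul_one k).mp (hS hZ).2) a b
  rwa [map_sub, map_mul, MvPolynomial.eval_C, eval_sq, eval_sq, sub_eq_zero] at this

theorem mem_zariskiClosure_conjCone_of_mul_self_eq_zero [CharZero K] (hD : D * D = 1)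
    (htr : D.trace = 0) {X : Matrix n n K} (hX : X.trace = 0) (hXX : X * X = 0) :
    X ∈ zariskiClosure (conjCone D) := by
  obtain ⟨Y, hYY, hY, hXY⟩ := exists_matrix_mul_self_eq_one_anticommute hXX
    (even_card_of_mul_self_eq_one_of_trace_eq_zero hD htr)
  refine mem_zariskiClosure_of_line (Y := Y) fun s hs =>
    mem_conjCone_of_mul_self_eq_smul_one hD htr (by simp [hX, hY]) hs ?_
  calc (X + s • Y) * (X + s • Y) = X * X + s • (X * Y + Y * X) + (s * s) • (Y * Y) := by
        simp only [add_mul, mul_add, smul_mul_assoc, mul_smul_comm, smul_smul, smul_add]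
        abel
    _ = (s * s) • 1 := by rw [hXX, hXY, hYY, smul_zero, zero_add, zero_add]

theorem tracelessScalarSquare_subset_conjCone_union [IsAlgClosed K] [CharZero K] (hD : D * D = 1)
    (htr : D.trace = 0) :
    tracelessScalarSquare K n ⊆ conjCone D ∪ {X | X.trace = 0 ∧ X * X = 0} := by
  rintro X ⟨hX, c, hc⟩
  obtain ⟨t, rfl⟩ := IsAlgClosed.exists_eq_mul_self c
  obtain rfl | ht := eq_or_ne t 0
  · exact .inr ⟨hX, by rw [hc, mul_zero, zero_smul]⟩
  · exact .inl (mem_conjCone_of_mul_self_eq_smul_one hD htr hX ht hc)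

theorem conjCone_union_subset_zariskiClosure [CharZero K] (hD : D * D = 1) (htr : D.trace = 0) :
    conjCone D ∪ {X | X.trace = 0 ∧ X * X = 0} ⊆ zariskiClosure (conjCone D) :=
  Set.union_subset (subset_zariskiClosure _) fun _ hX =>
    mem_zariskiClosure_conjCone_of_mul_self_eq_zero hD htr hX.1 hX.2

theorem stmt_10_general [IsAlgClosed K] [CharZero K] (hD : D * D = 1) (htr : D.trace = 0) {i j : n}
    (hij : i ≠ j) :
    {X : Matrix n n K | X.trace = 0 ∧
        ∀ g : GL n K, ((g : Matrix n n K) * (X * X) * (↑g⁻¹ : Matrix n n K)) i j = 0} =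
      tracelessScalarSquare K n ∧
    tracelessScalarSquare K n = zariskiClosure (conjCone D) ∧
    zariskiClosure (conjCone D) = conjCone D ∪ {X | X.trace = 0 ∧ X * X = 0} := by
  have : Nonempty n := ⟨i⟩
  have h₂₄ := tracelessScalarSquare_subset_conjCone_union hD htr
  have h₄₃ := conjCone_union_subset_zariskiClosure hD htr
  have h₃₂ := zariskiClosure_subset_tracelessScalarSquare
    (conjCone_subset_tracelessScalarSquare hD htr)
  exact ⟨Set.ext fun X => and_congr_right fun _ => forall_conj_apply_eq_zero_iff hij,
    (h₂₄.trans h₄₃).antisymm h₃₂, (h₃₂.trans h₂₄).antisymm h₄₃⟩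

end Cone

section SignDiagonal

/-- The matrix `diag(1, …, 1, -1, …, -1)` with `m` entries of each sign, which spans the centre of
the Levi subalgebra `(gl_m ⊕ gl_m) ∩ sl_{2m}`. -/
def signDiagonal (m : ℕ) : Mat (2 * m) :=
  diagonal fun i => if (i : ℕ) < m then 1 else -1

theorem signDiagonal_mul_self (m : ℕ) : signDiagonal m * signDiagonal m = 1 := by
  rw [signDiagonal, diagonal_mul_diagonal, ← diagonal_one]
  congr! 2 with i
  split_ifs <;> simp

theorem trace_signDiagonal (m : ℕ) : (signDiagonal m).trace = 0 := by
  rw [signDiagonal, trace_diagonal, ← (finCongr (two_mul m).symm).sum_comp, Fin.sum_univ_add]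
  simp

end SignDiagonal

theorem stmt_10 (m : ℕ) (hm : 2 ≤ m)
    -- `D = diag(1,…,1,−1,…,−1)` with `m` ones and `m` minus-ones
    (D : Mat (2 * m))
    (hD : D = Matrix.diagonal fun i : Fin (2 * m) => if (i : ℕ) < m then (1 : ℂ) else -1)
    (S₁ S₂ S₃ S₄ : Set (Mat (2 * m)))
    (hS₁ : S₁ = {X | X.trace = 0 ∧ ∀ g : GLn (2 * m),
      ((↑g : Mat (2 * m)) * (X * X) * (↑g⁻¹ : Mat (2 * m)))
        ⟨2 * m - 1, by omega⟩ ⟨0, by omega⟩ = 0})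
    (hS₂ : S₂ = {X | X.trace = 0 ∧ ∃ c : ℂ, X * X = c • (1 : Mat (2 * m))})
    (hS₃ : S₃ = zclosure {X | ∃ t : ℂ, t ≠ 0 ∧ ∃ g : GLn (2 * m),
      X = t • ((↑g : Mat (2 * m)) * D * (↑g⁻¹ : Mat (2 * m)))})
    (hS₄ : S₄ = {X | ∃ t : ℂ, t ≠ 0 ∧ ∃ g : GLn (2 * m),
      X = t • ((↑g : Mat (2 * m)) * D * (↑g⁻¹ : Mat (2 * m)))} ∪
      {X | X.trace = 0 ∧ X * X = 0}) :
    S₁ = S₂ ∧ S₂ = S₃ ∧ S₃ = S₄ := by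
  subst hD hS₁ hS₂ hS₃ hS₄
  rw [zclosure_eq_zariskiClosure]
  exact stmt_10_general (signDiagonal_mul_self m) (trace_signDiagonal m)
    (by simp only [ne_eq, Fin.mk.injEq]; lia)
end
end
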